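/- arXiv:2310.16707 — 2 statements merged into one kernel-verified Lean document; each statement's English description precedes it below -/
import Mathlib

section
/- Let f : ℝⁿ → ℝⁿ be continuously differentiable and let u be a bounded weak solution of u_t + f(u)_x = 0 on an open set Ω ⊆ ℝ × ℝ, i.e. u ∈ L^∞(Ω;ℝⁿ) and ∫∫_Ω ( u·φ_t + f(u)·φ_x ) dx dt = 0 for every φ ∈ C¹_c(Ω). Suppose u has an approximate jump at a point (τ,ξ) ∈ Ω, with left and right states u⁻ ≠ u⁺ and speed λ. Then the Rankine–Hugoniot equations hold: λ·(u⁺ − u⁻) = f(u⁺) − f(u⁻). -/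
open MeasureTheory Filter Set Topology

noncomputable section

/-- Partial derivative of a test function in the time variable. -/
def ptime (φ : ℝ × ℝ → ℝ) (p : ℝ × ℝ) : ℝ := deriv (fun s => φ (s, p.2)) p.1

/-- Partial derivative of a test function in the space variable. -/
def pspace (φ : ℝ × ℝ → ℝ) (p : ℝ × ℝ) : ℝ := deriv (fun y => φ (p.1, y)) p.2

/-- A continuous compactly supported weight times a bounded measurable function is integrable. -/
lemma integrable_weight {X E : Type*} [MeasureSpace X] [TopologicalSpace X]
    [OpensMeasurableSpace X] [IsFiniteMeasureOnCompacts (volume : Measure X)]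
    [NormedAddCommGroup E] [NormedSpace ℝ E]
    (g : X → ℝ) (hg : Continuous g) (hgs : HasCompactSupport g)
    (w : X → E) (hw : AEStronglyMeasurable w volume) (C : ℝ) (hC : ∀ p, ‖w p‖ ≤ C) :
    Integrable (fun p => g p • w p) := by
  have h1 : Integrable g := hg.integrable_of_hasCompactSupport hgs
  refine (h1.norm.mul_const C).mono' (h1.aestronglyMeasurable.smul hw) ?_
  filter_upwards with p
  rw [norm_smul]
  exact mul_le_mul_of_nonneg_left (hC p) (norm_nonneg _)

/-- Rescaled time derivative weight of the test function `a(t) a(x - lam t)`. -/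
def wt (a : ℝ → ℝ) (lam : ℝ) (q : ℝ × ℝ) : ℝ :=
  deriv a q.1 * a (q.2 - lam * q.1) - lam * (a q.1 * deriv a (q.2 - lam * q.1))

/-- Rescaled space derivative weight of the test function `a(t) a(x - lam t)`. -/
def ws (a : ℝ → ℝ) (lam : ℝ) (q : ℝ × ℝ) : ℝ :=
  a q.1 * deriv a (q.2 - lam * q.1)

lemma half_integral {E : Type*} [NormedAddCommGroup E] [NormedSpace ℝ E] [CompleteSpace E]
    (a : ℝ → ℝ) (ha : ContDiff ℝ 1 a) (hc : HasCompactSupport a) (h0 : a 0 = 1) (v w : E) :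
    ∫ y, deriv a y • (if y < 0 then v else w) = v - w := by
  have hi : Integrable (deriv a) :=
    (ha.continuous_deriv le_rfl).integrable_of_hasCompactSupport hc.deriv
  have hm : Measurable (fun y : ℝ => if y < 0 then (1:ℝ) else 0) :=
    Measurable.ite measurableSet_Iio measurable_const measurable_const
  have e : ∀ y : ℝ, deriv a y • (if y < 0 then v else w)
      = (Iio (0:ℝ)).indicator (deriv a) y • (v - w) + deriv a y • w := by
    intro y
    by_cases hy : y < 0
    · simp [hy, smul_sub]
    · simp [hy]
  have hz : ∫ y, deriv a y = 0 :=
    integral_eq_zero_of_hasDerivAt_of_integrable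
      (fun x => (ha.differentiable one_ne_zero x).hasDerivAt) hi
      (ha.continuous.integrable_of_hasCompactSupport hc)
  simp_rw [e]
  rw [integral_add ((hi.indicator measurableSet_Iio).smul_const _) (hi.smul_const _),
    integral_smul_const, integral_smul_const, hz, integral_indicator measurableSet_Iio,
    ← integral_Iic_eq_integral_Iio, hc.integral_Iic_deriv_eq ha 0, h0]
  simp

lemma jump_integral {E : Type*} [NormedAddCommGroup E] [NormedSpace ℝ E] [CompleteSpace E]
    (a : ℝ → ℝ) (ha : ContDiff ℝ 1 a) (hc : HasCompactSupport a) (h0 : a 0 = 1)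
    (lam : ℝ) (v w v' w' : E)
    (hint : Integrable (fun q : ℝ × ℝ => wt a lam q • (if q.2 < lam * q.1 then v else w)
      + ws a lam q • (if q.2 < lam * q.1 then v' else w'))) :
    ∫ q : ℝ × ℝ, (wt a lam q • (if q.2 < lam * q.1 then v else w)
      + ws a lam q • (if q.2 < lam * q.1 then v' else w'))
      = (∫ t, a t) • (lam • (w - v) - (w' - v')) := by
  have hda := ha.continuous_deriv le_rfl
  have hi : Integrable (deriv a) := hda.integrable_of_hasCompactSupport hc.deriv
  have hia : Integrable a := ha.continuous.integrable_of_hasCompactSupport hc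
  have hz : ∫ y, deriv a y = 0 :=
    integral_eq_zero_of_hasDerivAt_of_integrable
      (fun x => (ha.differentiable one_ne_zero x).hasDerivAt) hi hia
  have hm : ∀ v w : E, AEStronglyMeasurable (fun y : ℝ => if y < 0 then v else w) volume :=
    fun v w => (StronglyMeasurable.ite measurableSet_Iio stronglyMeasurable_const
      stronglyMeasurable_const).aestronglyMeasurable
  have hb : ∀ (v w : E) (y : ℝ), ‖if y < 0 then v else w‖ ≤ max ‖v‖ ‖w‖ := by
    intro v w y
    split_ifs <;> simp
  have I1 : ∀ v w : E, Integrable (fun y => a y • if y < 0 then v else w) := fun v w =>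
    integrable_weight a ha.continuous hc _ (hm v w) _ (hb v w)
  have I2 : ∀ v w : E, Integrable (fun y => deriv a y • if y < 0 then v else w) := fun v w =>
    integrable_weight _ hda hc.deriv _ (hm v w) _ (hb v w)
  rw [Measure.volume_eq_prod] at hint ⊢
  rw [integral_prod _ hint]
  have inner : ∀ t : ℝ, ∫ x, (wt a lam (t, x) • (if x < lam * t then v else w)
      + ws a lam (t, x) • (if x < lam * t then v' else w'))
      = deriv a t • (∫ y, a y • (if y < 0 then v else w))
        + a t • (lam • (w - v) - (w' - v')) := by
    intro t
    have := integral_sub_right_eq_self (μ := (volume : Measure ℝ)) (fun y =>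
      deriv a t • (a y • (if y < 0 then v else w))
      + (-(lam * a t) • (deriv a y • (if y < 0 then v else w))
      + a t • (deriv a y • (if y < 0 then v' else w')))) (lam * t)
    refine Eq.trans (Eq.trans (integral_congr_ae ?_) this) ?_
    · filter_upwards with x
      simp only [wt, ws, sub_neg]
      module
    have J1 : Integrable (fun y => deriv a t • (a y • (if y < 0 then v else w))) :=
      (I1 v w).smul (deriv a t)
    have J2 : Integrable (fun y => -(lam * a t) • (deriv a y • (if y < 0 then v else w))) :=
      (I2 v w).smul (-(lam * a t))
    have J3 : Integrable (fun y => a t • (deriv a y • (if y < 0 then v' else w'))) :=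
      (I2 v' w').smul (a t)
    have J4 : Integrable (fun y => -(lam * a t) • (deriv a y • (if y < 0 then v else w))
        + a t • (deriv a y • (if y < 0 then v' else w'))) := J2.add J3
    rw [integral_add J1 J4, integral_add J2 J3, integral_smul, integral_smul,
      integral_smul, half_integral a ha hc h0, half_integral a ha hc h0]
    module
  simp only [inner]
  rw [integral_add (hi.smul_const _) (hia.smul_const _), integral_smul_const,
    integral_smul_const, hz]
  simp

lemma weak_scaled {E : Type*} [NormedAddCommGroup E] [NormedSpace ℝ E]
    (f : E → E) (Ω : Set (ℝ × ℝ)) (u : ℝ × ℝ → E)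
    (hweak : ∀ φ : ℝ × ℝ → ℝ, ContDiff ℝ 1 φ → HasCompactSupport φ →
      tsupport φ ⊆ Ω →
      ∫ p : ℝ × ℝ, (ptime φ p • u p + pspace φ p • f (u p)) = 0)
    (τ ξ lam : ℝ) (a : ℝ → ℝ) (ha : ContDiff ℝ 1 a)
    (hs : ∀ q : ℝ × ℝ, a q.1 * a (q.2 - lam * q.1) ≠ 0 → |q.1| ≤ 1 ∧ |q.2| ≤ 1)
    (r : ℝ) (hr : 0 < r) (hball : Metric.closedBall (τ, ξ) r ⊆ Ω) :
    ∫ q : ℝ × ℝ, (wt a lam q • u (τ + r * q.1, ξ + r * q.2)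
      + ws a lam q • f (u (τ + r * q.1, ξ + r * q.2))) = 0 := by
  set φ : ℝ × ℝ → ℝ := fun p =>
    a (r⁻¹ * (p.1 - τ)) * a (r⁻¹ * (p.2 - ξ) - lam * (r⁻¹ * (p.1 - τ))) with hφ
  have hφc : ContDiff ℝ 1 φ := by
    refine ContDiff.mul (ha.comp (by fun_prop)) (ha.comp (by fun_prop))
  have hsub : Function.support φ ⊆ Metric.closedBall (τ, ξ) r := by
    intro p hp
    obtain ⟨h1, h2⟩ := hs (r⁻¹ * (p.1 - τ), r⁻¹ * (p.2 - ξ)) hp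
    simp only [abs_mul, abs_inv, abs_of_pos hr] at h1 h2
    rw [inv_mul_le_iff₀ hr, mul_one] at h1 h2
    rw [Metric.mem_closedBall, Prod.dist_eq, max_le_iff, Real.dist_eq, Real.dist_eq]
    exact ⟨h1, h2⟩
  have hts : tsupport φ ⊆ Metric.closedBall (τ, ξ) r :=
    closure_minimal hsub Metric.isClosed_closedBall
  have hcs : HasCompactSupport φ :=
    (isCompact_closedBall _ _).of_isClosed_subset (isClosed_tsupport _) hts
  have hd : ∀ x, HasDerivAt a (deriv a x) x :=
    fun x => (ha.differentiable one_ne_zero x).hasDerivAt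
  have hpt : ∀ q : ℝ × ℝ, ptime φ (τ + r * q.1, ξ + r * q.2) = r⁻¹ * wt a lam q := by
    intro q
    have l1 : HasDerivAt (fun s : ℝ => r⁻¹ * (s - τ)) r⁻¹ (τ + r * q.1) := by
      simpa using ((hasDerivAt_id (τ + r * q.1)).sub_const τ).const_mul r⁻¹
    have l2 : HasDerivAt (fun s : ℝ => r⁻¹ * (ξ + r * q.2 - ξ) - lam * (r⁻¹ * (s - τ)))
        (-(lam * r⁻¹)) (τ + r * q.1) := (l1.const_mul lam).const_sub _
    have e1 : r⁻¹ * (τ + r * q.1 - τ) = q.1 := by field_simp; ring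
    have e2 : r⁻¹ * (ξ + r * q.2 - ξ) = q.2 := by field_simp; ring
    have := (((hd _).comp (τ + r * q.1) l1).mul ((hd _).comp (τ + r * q.1) l2)).deriv
    simp only [ptime, hφ]
    refine Eq.trans this ?_
    simp only [Function.comp, e1, e2, wt]
    ring
  have hps : ∀ q : ℝ × ℝ, pspace φ (τ + r * q.1, ξ + r * q.2) = r⁻¹ * ws a lam q := by
    intro q
    have l2 : HasDerivAt (fun y : ℝ => r⁻¹ * (y - ξ) - lam * (r⁻¹ * (τ + r * q.1 - τ)))
        r⁻¹ (ξ + r * q.2) := by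
      simpa using (((hasDerivAt_id (ξ + r * q.2)).sub_const ξ).const_mul r⁻¹).sub_const
        (lam * (r⁻¹ * (τ + r * q.1 - τ)))
    have e1 : r⁻¹ * (τ + r * q.1 - τ) = q.1 := by field_simp; ring
    have e2 : r⁻¹ * (ξ + r * q.2 - ξ) = q.2 := by field_simp; ring
    have := (((hd _).comp (ξ + r * q.2) l2).const_mul (a (r⁻¹ * (τ + r * q.1 - τ)))).deriv
    simp only [pspace, hφ]
    refine Eq.trans this ?_
    simp only [e1, e2, ws]
    ring
  have h0 := hweak φ hφc hcs (hts.trans hball)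
  rw [← integral_add_left_eq_self _ ((τ, ξ) : ℝ × ℝ)] at h0
  have h1 := Measure.integral_comp_smul (volume : Measure (ℝ × ℝ)) (fun p =>
    ptime φ ((τ, ξ) + p) • u ((τ, ξ) + p) + pspace φ ((τ, ξ) + p) • f (u ((τ, ξ) + p))) r
  rw [h0, smul_zero] at h1
  have h2 : ∀ q : ℝ × ℝ, ((τ, ξ) : ℝ × ℝ) + r • q = (τ + r * q.1, ξ + r * q.2) := fun q => rfl
  simp only [h2, hpt, hps, mul_smul, ← smul_add] at h1
  rw [integral_smul] at h1
  exact (smul_eq_zero.1 h1).resolve_left (inv_ne_zero hr.ne')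

lemma jump_scaled {E : Type*} [NormedAddCommGroup E]
    (u : ℝ × ℝ → E) (τ ξ lam : ℝ) (um up : E)
    (hjump : Tendsto
      (fun r : ℝ => (1 / r ^ 2) *
        ∫ t in (-r)..r, ∫ x in (-r)..r,
          ‖u (τ + t, ξ + x) - (if x < lam * t then um else up)‖)
      (𝓝[>] 0) (𝓝 0)) :
    Tendsto (fun r : ℝ => ∫ t in (-1:ℝ)..1, ∫ x in (-1:ℝ)..1,
          ‖u (τ + r * t, ξ + r * x) - (if x < lam * t then um else up)‖)
      (𝓝[>] 0) (𝓝 0) := by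
  refine hjump.congr' ?_
  filter_upwards [self_mem_nhdsWithin] with r hr
  have hr : 0 < r := hr
  have e : ∀ t x : ℝ, (r * x < lam * (r * t)) ↔ (x < lam * t) := by
    intro t x
    rw [show lam * (r * t) = r * (lam * t) by ring, mul_lt_mul_iff_right₀ hr]
  have i1 : ∀ t : ℝ, ∫ x in (-1:ℝ)..1,
      ‖u (τ + r * t, ξ + r * x) - (if x < lam * t then um else up)‖
      = r⁻¹ * ∫ x in (-r)..r,
        ‖u (τ + r * t, ξ + x) - (if x < lam * (r * t) then um else up)‖ := by
    intro t
    have := intervalIntegral.integral_comp_mul_left (a := -1) (b := 1) (fun x =>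
      ‖u (τ + r * t, ξ + x) - (if x < lam * (r * t) then um else up)‖) hr.ne'
    simp only [e] at this
    simpa using this
  simp only [i1]
  have := intervalIntegral.integral_comp_mul_left (a := -1) (b := 1) (fun t =>
    r⁻¹ * ∫ x in (-r)..r, ‖u (τ + t, ξ + x) - (if x < lam * t then um else up)‖) hr.ne'
  rw [this, intervalIntegral.integral_const_mul]
  simp only [mul_neg, mul_one, smul_eq_mul]
  rw [← mul_assoc]
  congr 1
  field_simp

lemma rh_core
    {n : ℕ} (f : EuclideanSpace ℝ (Fin n) → EuclideanSpace ℝ (Fin n))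
    (hf : ContDiff ℝ 1 f)
    (Ω : Set (ℝ × ℝ)) (hΩ : IsOpen Ω)
    (u : ℝ × ℝ → EuclideanSpace ℝ (Fin n))
    (hmeas : Measurable u)
    (hbdd : ∃ C, ∀ p, ‖u p‖ ≤ C)
    (hweak : ∀ φ : ℝ × ℝ → ℝ, ContDiff ℝ 1 φ → HasCompactSupport φ →
      tsupport φ ⊆ Ω →
      ∫ p : ℝ × ℝ, (ptime φ p • u p + pspace φ p • f (u p)) = 0)
    (τ ξ : ℝ) (hτξ : (τ, ξ) ∈ Ω)
    (um up : EuclideanSpace ℝ (Fin n)) (lam : ℝ)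
    (hjump : Tendsto
      (fun r : ℝ => (1 / r ^ 2) *
        ∫ t in (-r)..r, ∫ x in (-r)..r,
          ‖u (τ + t, ξ + x) - (if x < lam * t then um else up)‖)
      (𝓝[>] 0) (𝓝 0)) :
    lam • (up - um) = f up - f um := by
  have hJ := jump_scaled u τ ξ lam um up hjump
  -- the bump
  set δ : ℝ := (2 * (1 + |lam|))⁻¹ with hδ
  have hδ0 : 0 < δ := by positivity
  have hδ1 : δ + |lam| * δ = 1 / 2 := by rw [hδ]; field_simp
  let a : ContDiffBump (0 : ℝ) := ⟨δ / 2, δ, by positivity, by linarith⟩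
  have ha : ContDiff ℝ 1 a := a.contDiff
  have hc : HasCompactSupport a := a.hasCompactSupport
  have h0 : a 0 = 1 := a.one_of_mem_closedBall (by simp [a]; positivity)
  have hda := ha.continuous_deriv le_rfl
  have s1 : ∀ x, a x ≠ 0 → |x| ≤ δ := by
    intro x hx
    have : x ∈ tsupport a := subset_tsupport _ hx
    rw [a.tsupport_eq] at this
    simpa [a] using this
  have s2 : ∀ x, deriv a x ≠ 0 → |x| ≤ δ := by
    intro x hx
    have : x ∈ tsupport a := support_deriv_subset hx
    rw [a.tsupport_eq] at this
    simpa [a] using this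
  have sq : ∀ q : ℝ × ℝ, |q.1| ≤ δ → |q.2 - lam * q.1| ≤ δ → |q.1| ≤ 1 / 2 ∧ |q.2| ≤ 1 / 2 := by
    intro q h1 h2
    have h3 : |lam * q.1| ≤ |lam| * δ := by
      rw [abs_mul]; exact mul_le_mul_of_nonneg_left h1 (abs_nonneg _)
    have h4 : |q.2| ≤ |q.2 - lam * q.1| + |lam * q.1| := by
      simpa using abs_add_le (q.2 - lam * q.1) (lam * q.1)
    have h5 : 0 ≤ |lam| * δ := by positivity
    constructor <;> linarith
  have sws : ∀ q : ℝ × ℝ, ws a lam q ≠ 0 → |q.1| ≤ 1 / 2 ∧ |q.2| ≤ 1 / 2 := by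
    intro q hq
    exact sq q (s1 _ (left_ne_zero_of_mul hq)) (s2 _ (right_ne_zero_of_mul hq))
  have swt : ∀ q : ℝ × ℝ, wt a lam q ≠ 0 → |q.1| ≤ 1 / 2 ∧ |q.2| ≤ 1 / 2 := by
    intro q hq
    by_cases h : deriv a q.1 * a (q.2 - lam * q.1) = 0
    · refine sws q fun h' => hq ?_
      have h' : a q.1 * deriv a (q.2 - lam * q.1) = 0 := h'
      rw [wt, h, h']; simp
    · exact sq q (s2 _ (left_ne_zero_of_mul h)) (s1 _ (right_ne_zero_of_mul h))
  have cs : ∀ g : ℝ × ℝ → ℝ, (∀ q : ℝ × ℝ, g q ≠ 0 → |q.1| ≤ 1 / 2 ∧ |q.2| ≤ 1 / 2) →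
      HasCompactSupport g := by
    intro g hg
    refine HasCompactSupport.intro (isCompact_closedBall (0 : ℝ × ℝ) 1) fun q hq => ?_
    by_contra h
    refine hq ?_
    obtain ⟨h1, h2⟩ := hg q h
    rw [mem_closedBall_zero_iff, Prod.norm_def, max_le_iff]
    constructor <;> simp only [Real.norm_eq_abs] <;> linarith
  have hac := ha.continuous
  have cwt : Continuous (wt a lam) := by unfold wt; fun_prop
  have cws : Continuous (ws a lam) := by unfold ws; fun_prop
  have hcwt := cs _ swt
  have hcws := cs _ sws
  obtain ⟨M1, hM1⟩ := cwt.bounded_above_of_compact_support hcwt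
  obtain ⟨M2, hM2⟩ := cws.bounded_above_of_compact_support hcws
  have hM10 : 0 ≤ M1 := (norm_nonneg _).trans (hM1 0)
  have hM20 : 0 ≤ M2 := (norm_nonneg _).trans (hM2 0)
  -- bounds on u
  obtain ⟨C0, hC0⟩ := hbdd
  set C : ℝ := max C0 (max ‖um‖ ‖up‖) with hCdef
  have hC : ∀ p, ‖u p‖ ≤ C := fun p => (hC0 p).trans (le_max_left _ _)
  have hfc : Continuous f := hf.continuous
  set W : ℝ × ℝ → EuclideanSpace ℝ (Fin n) := fun q => if q.2 < lam * q.1 then um else up with hW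
  have hWm : Measurable W :=
    Measurable.ite (measurableSet_lt measurable_snd (by fun_prop)) measurable_const measurable_const
  have hWC : ∀ q, ‖W q‖ ≤ C := by
    intro q
    simp only [hW]
    split_ifs
    · exact (le_max_left _ _).trans (le_max_right _ _)
    · exact (le_max_right _ _).trans (le_max_right _ _)
  obtain ⟨K, hK⟩ := (hf.contDiffOn (s := Metric.closedBall 0 C)).exists_lipschitzOnWith
    one_ne_zero (convex_closedBall _ _) (isCompact_closedBall _ _)
  have hlip : ∀ v w, ‖v‖ ≤ C → ‖w‖ ≤ C → ‖f v - f w‖ ≤ K * ‖v - w‖ := by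
    intro v w hv hw
    exact hK.norm_sub_le (by simpa using hv) (by simpa using hw)
  obtain ⟨F, hF⟩ := ((isCompact_closedBall (0 : EuclideanSpace ℝ (Fin n)) C).image
    hfc).isBounded.exists_norm_le
  have hF' : ∀ v, ‖v‖ ≤ C → ‖f v‖ ≤ F := fun v hv => hF _ ⟨v, by simpa using hv, rfl⟩
  have hInt : ∀ w : ℝ × ℝ → EuclideanSpace ℝ (Fin n), Measurable w → (∀ q, ‖w q‖ ≤ C) →
      Integrable (fun q => wt a lam q • w q + ws a lam q • f (w q)) := by
    intro w hw hwC
    exact (integrable_weight _ cwt hcwt w hw.aestronglyMeasurable C hwC).add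
      (integrable_weight _ cws hcws (fun q => f (w q))
        (hfc.measurable.comp hw).aestronglyMeasurable F fun q => hF' _ (hwC q))
  have hcalc := jump_integral a ha hc h0 lam um up (f um) (f up) (by
    have := hInt W hWm hWC
    simpa only [hW, apply_ite f] using this)
  set D := ∫ q, (wt a lam q • W q + ws a lam q • f (W q)) with hD
  have hDe : D = (∫ t, a t) • (lam • (up - um) - (f up - f um)) := by
    rw [hD, ← hcalc]
    simp only [hW, apply_ite f]
  -- main estimate
  have hest : ∀ᶠ r in 𝓝[>] (0:ℝ), ‖D‖ ≤ (M1 + M2 * K) * ∫ t in (-1:ℝ)..1, ∫ x in (-1:ℝ)..1,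
          ‖u (τ + r * t, ξ + r * x) - (if x < lam * t then um else up)‖ := by
    obtain ⟨ε, hε, hball⟩ := Metric.nhds_basis_closedBall.mem_iff.1 (hΩ.mem_nhds hτξ)
    filter_upwards [Ioo_mem_nhdsGT hε] with r hr
    have hw0 := weak_scaled f Ω u hweak τ ξ lam a ha (fun q hq => by
      obtain ⟨h1, h2⟩ := sq q (s1 _ (left_ne_zero_of_mul hq)) (s1 _ (right_ne_zero_of_mul hq))
      constructor <;> linarith) r hr.1
      ((Metric.closedBall_subset_closedBall hr.2.le).trans hball)
    set v : ℝ × ℝ → EuclideanSpace ℝ (Fin n) := fun q => u (τ + r * q.1, ξ + r * q.2) with hv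
    have hvm : Measurable v := hmeas.comp (by fun_prop)
    have hvC : ∀ q, ‖v q‖ ≤ C := fun q => hC _
    have hDs : D = ∫ q, ((wt a lam q • W q + ws a lam q • f (W q))
        - (wt a lam q • v q + ws a lam q • f (v q))) := by
      rw [integral_sub (hInt W hWm hWC) (hInt v hvm hvC), hw0, sub_zero]
    set S : Set (ℝ × ℝ) := Ioc (-1:ℝ) 1 ×ˢ Ioc (-1:ℝ) 1 with hS
    have hSm : MeasurableSet S := measurableSet_Ioc.prod measurableSet_Ioc
    have hSfin : volume S < ⊤ := by
      rw [hS, Measure.volume_eq_prod, Measure.prod_prod]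
      simp [Real.volume_Ioc, ENNReal.mul_lt_top]
    have hIS : IntegrableOn (fun q => ‖v q - W q‖) S := by
      refine Measure.integrableOn_of_bounded (M := 2 * C) hSfin.ne
        (hvm.sub hWm).norm.aestronglyMeasurable ?_
      filter_upwards with q
      rw [norm_norm]
      linarith [norm_sub_le (v q) (W q), hvC q, hWC q]
    have hiter : ∫ q in S, ‖v q - W q‖ = ∫ t in (-1:ℝ)..1, ∫ x in (-1:ℝ)..1,
          ‖u (τ + r * t, ξ + r * x) - (if x < lam * t then um else up)‖ := by
      rw [Measure.volume_eq_prod] at hIS ⊢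
      rw [hS, setIntegral_prod _ hIS, intervalIntegral.integral_of_le (by norm_num)]
      simp only [intervalIntegral.integral_of_le (show (-1:ℝ) ≤ 1 by norm_num)]
      rfl
    rw [← hiter, ← integral_const_mul, ← integral_indicator hSm, hDs]
    refine norm_integral_le_of_norm_le ((integrable_indicator_iff hSm).2 (hIS.const_mul _)) ?_
    filter_upwards with q
    by_cases hq : q ∈ S
    · rw [indicator_of_mem hq]
      have e : (wt a lam q • W q + ws a lam q • f (W q))
        - (wt a lam q • v q + ws a lam q • f (v q))
        = wt a lam q • (W q - v q) + ws a lam q • (f (W q) - f (v q)) := by module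
      rw [e]
      refine (norm_add_le _ _).trans ?_
      rw [norm_smul, norm_smul]
      have h1 := hlip _ _ (hWC q) (hvC q)
      have h2 : ‖wt a lam q‖ * ‖W q - v q‖ ≤ M1 * ‖W q - v q‖ :=
        mul_le_mul_of_nonneg_right (hM1 q) (norm_nonneg _)
      have h3 : ‖ws a lam q‖ * ‖f (W q) - f (v q)‖ ≤ M2 * (K * ‖W q - v q‖) :=
        mul_le_mul (hM2 q) h1 (norm_nonneg _) hM20
      rw [norm_sub_rev (v q)]
      linarith
    · rw [indicator_of_notMem hq]
      have hz : ∀ g : ℝ × ℝ → ℝ, (∀ q : ℝ × ℝ, g q ≠ 0 → |q.1| ≤ 1 / 2 ∧ |q.2| ≤ 1 / 2) →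
          g q = 0 := by
        intro g hg
        by_contra h
        obtain ⟨h1, h2⟩ := hg q h
        rw [abs_le] at h1 h2
        exact hq ⟨⟨by linarith, by linarith⟩, ⟨by linarith, by linarith⟩⟩
      rw [hz _ swt, hz _ sws]
      simp
  have hlim : ‖D‖ ≤ (M1 + M2 * K) * 0 := ge_of_tendsto (hJ.const_mul _) hest
  have hD0 : D = 0 := by
    rw [mul_zero] at hlim
    exact norm_le_zero_iff.1 hlim
  rw [hD0] at hDe
  have hpos : 0 < ∫ t, a t := a.integral_pos
  exact sub_eq_zero.1 ((smul_eq_zero.1 hDe.symm).resolve_left hpos.ne')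

/-- **Rankine–Hugoniot equations at a point of approximate jump.**
If `u` is a bounded weak solution of `u_t + f(u)_x = 0` on an open set `Ω ⊆ ℝ × ℝ`
and `u` has an approximate jump at `(τ,ξ) ∈ Ω` with left state `u⁻`, right state `u⁺`
and speed `λ`, then `λ (u⁺ - u⁻) = f(u⁺) - f(u⁻)`. -/
theorem rankine_hugoniot_at_approximate_jump
    {n : ℕ} (f : EuclideanSpace ℝ (Fin n) → EuclideanSpace ℝ (Fin n))
    (hf : ContDiff ℝ 1 f)
    (Ω : Set (ℝ × ℝ)) (hΩ : IsOpen Ω)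
    (u : ℝ × ℝ → EuclideanSpace ℝ (Fin n))
    (hmeas : Measurable u)
    (hbdd : ∃ C, ∀ p, ‖u p‖ ≤ C)
    (hweak : ∀ φ : ℝ × ℝ → ℝ, ContDiff ℝ 1 φ → HasCompactSupport φ →
      tsupport φ ⊆ Ω →
      ∫ p : ℝ × ℝ, (ptime φ p • u p + pspace φ p • f (u p)) = 0)
    (τ ξ : ℝ) (hτξ : (τ, ξ) ∈ Ω)
    (um up : EuclideanSpace ℝ (Fin n)) (lam : ℝ) (hne : um ≠ up)
    (hjump : Tendsto
      (fun r : ℝ => (1 / r ^ 2) *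
        ∫ t in (-r)..r, ∫ x in (-r)..r,
          ‖u (τ + t, ξ + x) - (if x < lam * t then um else up)‖)
      (𝓝[>] 0) (𝓝 0)) :
    lam • (up - um) = f up - f um := by
  exact rh_core f hf Ω hΩ u hmeas hbdd hweak τ ξ hτξ um up lam hjump
end
end

section
/- Let u_t + f(u)_x = 0 be a strictly hyperbolic n×n system with f twice continuously differentiable, all characteristic speeds contained in [−1,1], and values of u in a fixed compact set. Let t ↦ u(t,·) be a weak solution which is Lipschitz continuous with values in L¹(ℝ;ℝⁿ), and let τ ≥ 0, a < b, ε > 0, M > 0 satisfy: (i) Tot.Var.{u(t,·)} ≤ M for all t ≥ 0; (ii) Tot.Var.{u(τ,·); (a,b)} ≤ ε; (iii) setting V(t) = Tot.Var.{ u(t,·); ( a + (t−τ), b − (t−τ) ) }, one has lim_{h→0+} ( Leb{ t ∈ [τ,τ+h] : V(t) > 2ε } )/h = 0. Let ξ ∈ (a,b), set à = Df(u(τ,ξ)), and let W be the solution of the linear constant-coefficient Cauchy problem w_t + Ã w_x = 0, w(τ,x) = u(τ,x). Then there is a constant C, depending only on the system and on M, such that limsup_{h→0+} (1/h) ∫_{a+h}^{b−h}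 | u(τ+h, x) − W(τ+h, x) | dx ≤ C ε². -/
open MeasureTheory Filter Set Topology
open scoped RealInnerProductSpace

noncomputable section

lemma exists_step (z δ : ℝ) (hδ : 0 < δ) : ∃ σ : ℝ → ℝ, ContDiff ℝ 1 σ ∧
    (∀ t, 0 ≤ σ t ∧ σ t ≤ 1) ∧ (∀ t, t ≤ z + δ → σ t = 0) ∧ (∀ t, z + 2 * δ ≤ t → σ t = 1) ∧
    (∀ t, 0 ≤ deriv σ t) ∧ (∀ t, t ∉ Icc (z + δ) (z + 2 * δ) → deriv σ t = 0) ∧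
    Continuous (deriv σ) ∧ HasCompactSupport (deriv σ) ∧ ∫ t, deriv σ t = 1 := by
  set σ : ℝ → ℝ := fun t => Real.smoothTransition ((t - z) / δ - 1) with hσ
  have hC : ContDiff ℝ 1 σ := by
    have : ContDiff ℝ 1 Real.smoothTransition := Real.smoothTransition.contDiff (n := 1)
    exact this.comp (by fun_prop)
  have h0 : ∀ t, t ≤ z + δ → σ t = 0 := by
    intro t ht
    apply Real.smoothTransition.zero_of_nonpos
    rw [sub_nonpos, div_le_one hδ]; linarith
  have h1 : ∀ t, z + 2 * δ ≤ t → σ t = 1 := by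
    intro t ht
    apply Real.smoothTransition.one_of_one_le
    rw [le_sub_iff_add_le, le_div_iff₀ hδ]; linarith
  have hmono : Monotone σ := by
    intro s t hst
    apply Real.smoothTransition.monotone
    gcongr
  have hd0 : ∀ t, t ∉ Icc (z + δ) (z + 2 * δ) → deriv σ t = 0 := by
    intro t ht
    rw [mem_Icc, not_and_or, not_le, not_le] at ht
    rcases ht with ht | ht
    · have : σ =ᶠ[𝓝 t] fun _ => 0 := by
        filter_upwards [Iio_mem_nhds ht] with s hs
        exact h0 s (le_of_lt hs)
      rw [this.deriv_eq]; simp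
    · have : σ =ᶠ[𝓝 t] fun _ => 1 := by
        filter_upwards [Ioi_mem_nhds ht] with s hs
        exact h1 s (le_of_lt hs)
      rw [this.deriv_eq]; simp
  have hdc : Continuous (deriv σ) := hC.continuous_deriv le_rfl
  have hcs : HasCompactSupport (deriv σ) :=
    HasCompactSupport.intro (isCompact_Icc (a := z + δ) (b := z + 2 * δ)) hd0
  refine ⟨σ, hC, fun t => ⟨Real.smoothTransition.nonneg _, Real.smoothTransition.le_one _⟩,
    h0, h1, fun t => hmono.deriv_nonneg, hd0, hdc, hcs, ?_⟩
  have := integral_of_hasDerivAt_of_tendsto (f := σ) (f' := deriv σ) (m := 0) (n := 1)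
    (fun x => (hC.differentiable (by norm_num) x).hasDerivAt)
    (hdc.integrable_of_hasCompactSupport hcs)
    (tendsto_const_nhds.congr' (by
      filter_upwards [eventually_le_atBot (z + δ)] with t ht using (h0 t ht).symm))
    (tendsto_const_nhds.congr' (by
      filter_upwards [eventually_ge_atTop (z + 2 * δ)] with t ht using (h1 t ht).symm))
  simpa using this

lemma step_approx (z δ : ℝ) (hδ : 0 < δ) (hz : 0 ≤ z) (σ F : ℝ → ℝ) (C B : ℝ) (hC : 0 ≤ C)
    (hF : StronglyMeasurable F) (hFB : ∀ t, |F t| ≤ B)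
    (hlip : ∀ t, 0 ≤ t → |F t - F z| ≤ C * |t - z|)
    (h0 : ∀ t, 0 ≤ deriv σ t) (hd : ∀ t, t ∉ Icc (z + δ) (z + 2 * δ) → deriv σ t = 0)
    (hc : Continuous (deriv σ)) (hcs : HasCompactSupport (deriv σ)) (hi : ∫ t, deriv σ t = 1) :
    Integrable (fun t => deriv σ t * F t) ∧ |(∫ t, deriv σ t * F t) - F z| ≤ 2 * δ * C := by
  have hii := hc.integrable_of_hasCompactSupport hcs (μ := volume)
  have hI : Integrable (fun t => deriv σ t * F t) :=
    hii.mul_bdd (c := B) hF.aestronglyMeasurable (Eventually.of_forall fun t => hFB t)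
  refine ⟨hI, ?_⟩
  have e : (∫ t, deriv σ t * F t) - F z = ∫ t, deriv σ t * (F t - F z) := by
    have : ∀ t, deriv σ t * (F t - F z) = deriv σ t * F t - deriv σ t * F z := fun t => by ring
    simp_rw [this]
    rw [integral_sub hI (hii.mul_const _), integral_mul_const, hi, one_mul]
  rw [e, ← Real.norm_eq_abs]
  have e2 : 2 * δ * C = ∫ t, deriv σ t * (2 * δ * C) := by
    rw [integral_mul_const, hi, one_mul]
  rw [e2]
  refine norm_integral_le_of_norm_le (hii.mul_const _) (Eventually.of_forall fun t => ?_)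
  rw [norm_mul, Real.norm_eq_abs, Real.norm_eq_abs, abs_of_nonneg (h0 t)]
  by_cases ht : t ∈ Icc (z + δ) (z + 2 * δ)
  · refine mul_le_mul_of_nonneg_left ?_ (h0 t)
    refine (hlip t (by linarith [ht.1])).trans ?_
    rw [abs_of_nonneg (by linarith [ht.1]), mul_comm]
    exact mul_le_mul_of_nonneg_right (by linarith [ht.2]) hC
  · simp [hd t ht]

lemma shear_support (α β : ℝ → ℝ) (T lam : ℝ) (hα : Continuous α) (hβ : Continuous β)
    (hαc : HasCompactSupport α) (hβc : HasCompactSupport β) :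
    Continuous (fun p : ℝ × ℝ => α p.1 * β (p.2 + (T - p.1) * lam)) ∧
    HasCompactSupport (fun p : ℝ × ℝ => α p.1 * β (p.2 + (T - p.1) * lam)) := by
  refine ⟨by fun_prop, ?_⟩
  have hcomp := (hαc.isCompact.prod hβc.isCompact).image
    (f := fun q : ℝ × ℝ => (q.1, q.2 - (T - q.1) * lam)) (by fun_prop)
  refine HasCompactSupport.intro hcomp ?_
  rintro ⟨t, x⟩ h
  by_contra hne
  apply h
  refine ⟨(t, x + (T - t) * lam), ⟨subset_tsupport _ ?_, subset_tsupport _ ?_⟩, by simp⟩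
  · exact left_ne_zero_of_mul hne
  · exact right_ne_zero_of_mul hne

lemma weak_identity (v g : ℝ → ℝ → ℝ) (lam : ℝ) (hvm : Measurable (Function.uncurry v))
    (hgm : Measurable (Function.uncurry g)) (B : ℝ) (hvB : ∀ t x, |v t x| ≤ B)
    (hgB : ∀ t x, |g t x| ≤ B) (hvi : ∀ t, Integrable (v t)) (M' : ℝ) (hM' : 0 ≤ M')
    (hlip : ∀ s t : ℝ, 0 ≤ s → 0 ≤ t → (∫ x : ℝ, |v t x - v s x|) ≤ M' * |t - s|)
    (hweak : ∀ φ : ℝ × ℝ → ℝ, ContDiff ℝ 1 φ → HasCompactSupport φ →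
        tsupport φ ⊆ Set.Ioi (0 : ℝ) ×ˢ Set.univ →
        ∫ p : ℝ × ℝ, (ptime φ p * v p.1 p.2 + pspace φ p * (lam * v p.1 p.2 + g p.1 p.2)) = 0)
    (τ T : ℝ) (hτ : 0 ≤ τ) (hT : τ ≤ T) (ψ : ℝ → ℝ) (hψ : ContDiff ℝ 1 ψ)
    (hc : HasCompactSupport ψ) (h1 : ∀ x, |ψ x| ≤ 1) :
    IntervalIntegrable (fun t => |∫ x, deriv ψ (x + (T - t) * lam) * g t x|) volume τ T ∧
    |(∫ x, ψ x * v T x) - ∫ x, ψ (x + (T - τ) * lam) * v τ x| ≤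
      ∫ t in τ..T, |∫ x, deriv ψ (x + (T - t) * lam) * g t x| := by
  have hψc := hψ.continuous
  have hdc : Continuous (deriv ψ) := hψ.continuous_deriv le_rfl
  have hdcs : HasCompactSupport (deriv ψ) := hc.deriv
  have hψi : Integrable ψ := hψc.integrable_of_hasCompactSupport hc
  have hdi : Integrable (deriv ψ) := hdc.integrable_of_hasCompactSupport hdcs
  have hB0 : 0 ≤ B := (abs_nonneg _).trans (hvB 0 0)
  set F : ℝ → ℝ := fun t => ∫ x, ψ (x + (T - t) * lam) * v t x with hF
  set G : ℝ → ℝ := fun t => ∫ x, deriv ψ (x + (T - t) * lam) * g t x with hG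
  have hvt : ∀ t, Measurable (v t) := fun t => hvm.comp measurable_prodMk_left
  have hgt : ∀ t, Measurable (g t) := fun t => hgm.comp measurable_prodMk_left
  have hFm : StronglyMeasurable F := by
    have : Measurable (fun p : ℝ × ℝ => ψ (p.2 + (T - p.1) * lam) * v p.1 p.2) :=
      (Continuous.measurable (by fun_prop)).mul hvm
    exact this.stronglyMeasurable.integral_prod_right'
  have hGm : StronglyMeasurable G := by
    have : Measurable (fun p : ℝ × ℝ => deriv ψ (p.2 + (T - p.1) * lam) * g p.1 p.2) :=
      (Continuous.measurable (by fun_prop)).mul hgm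
    exact this.stronglyMeasurable.integral_prod_right'
  set BF := (∫ x, |ψ x|) * B with hBF
  set BG := (∫ x, |deriv ψ x|) * B with hBG
  have hBG0 : 0 ≤ BG := mul_nonneg (integral_nonneg fun x => abs_nonneg _) hB0
  have hFB : ∀ t, |F t| ≤ BF := by
    intro t
    rw [hBF, ← integral_mul_const, ← Real.norm_eq_abs,
      ← integral_add_right_eq_self (fun x => |ψ x| * B) ((T - t) * lam)]
    refine norm_integral_le_of_norm_le ((hψi.abs.mul_const B).comp_add_right _)
      (Eventually.of_forall fun x => ?_)
    rw [norm_mul, Real.norm_eq_abs, Real.norm_eq_abs]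
    exact mul_le_mul_of_nonneg_left (hvB _ _) (abs_nonneg _)
  have hGB : ∀ t, |G t| ≤ BG := by
    intro t
    rw [hBG, ← integral_mul_const, ← Real.norm_eq_abs,
      ← integral_add_right_eq_self (fun x => |deriv ψ x| * B) ((T - t) * lam)]
    refine norm_integral_le_of_norm_le ((hdi.abs.mul_const B).comp_add_right _)
      (Eventually.of_forall fun x => ?_)
    rw [norm_mul, Real.norm_eq_abs, Real.norm_eq_abs]
    exact mul_le_mul_of_nonneg_left (hgB _ _) (abs_nonneg _)
  have hGI : ∀ p q, IntervalIntegrable (fun t => |G t|) volume p q := by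
    intro p q
    refine IntervalIntegrable.mono_fun (f := fun _ => BG) (by simp)
      hGm.measurable.abs.aestronglyMeasurable
      (Eventually.of_forall fun x => ?_)
    simp only [Real.norm_eq_abs, abs_abs]
    exact (hGB x).trans (le_abs_self _)
  refine ⟨hGI τ T, ?_⟩
  obtain ⟨L, hL⟩ := hψ.lipschitzWith_of_hasCompactSupport hc (by norm_num)
  set Cz : ℝ → ℝ := fun z => M' + L * |lam| * ∫ x, |v z x| with hCz
  have hCz0 : ∀ z, 0 ≤ Cz z := fun z => by
    have : 0 ≤ ∫ x, |v z x| := integral_nonneg fun x => abs_nonneg _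
    positivity
  have hFlip : ∀ z, 0 ≤ z → ∀ t, 0 ≤ t → |F t - F z| ≤ Cz z * |t - z| := by
    intro z hz t ht
    have hpm : ∀ s, AEStronglyMeasurable (fun x => ψ (x + (T - s) * lam)) volume := fun s =>
      (Continuous.measurable (by fun_prop)).aestronglyMeasurable
    have hi : ∀ s r, Integrable (fun x => ψ (x + (T - s) * lam) * v r x) := fun s r =>
      (hvi r).bdd_mul (c := 1) (hpm s) (Eventually.of_forall fun x => h1 _)
    have e : F t - F z = ∫ x, (ψ (x + (T - t) * lam) * (v t x - v z x) +
        (ψ (x + (T - t) * lam) - ψ (x + (T - z) * lam)) * v z x) := by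
      rw [hF]; dsimp only
      rw [← integral_sub (hi t t) (hi z z)]
      congr 1; funext x; ring
    have hdv : Integrable (fun x => |v t x - v z x|) := ((hvi t).sub (hvi z)).abs
    have e2 : Cz z * |t - z| ≥ ∫ x, (|v t x - v z x| + L * |lam| * |t - z| * |v z x|) := by
      rw [integral_add hdv ((hvi z).abs.const_mul _), integral_const_mul, hCz]
      dsimp only
      have := hlip z t hz ht
      nlinarith
    refine le_trans ?_ e2
    rw [e, ← Real.norm_eq_abs]
    refine norm_integral_le_of_norm_le
      (hdv.add ((hvi z).abs.const_mul _)) (Eventually.of_forall fun x => ?_)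
    refine (norm_add_le _ _).trans ?_
    simp only [norm_mul, Real.norm_eq_abs]
    have hl := hL.dist_le_mul (x + (T - t) * lam) (x + (T - z) * lam)
    rw [Real.dist_eq, Real.dist_eq] at hl
    have e3 : |x + (T - t) * lam - (x + (T - z) * lam)| = |lam| * |t - z| := by
      rw [← abs_mul, ← abs_neg]; congr 1; ring
    rw [e3] at hl
    have a1 := mul_le_mul_of_nonneg_right hl (abs_nonneg (v z x))
    have a2 := mul_le_mul_of_nonneg_right (h1 (x + (T - t) * lam)) (abs_nonneg (v t x - v z x))
    linarith
  have main : ∀ δ, 0 < δ → |F T - F τ| ≤ (∫ t in τ..T, |G t|) + δ *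
      (2 * BG + 2 * Cz τ + 2 * Cz T) := by
    intro δ hδ
    obtain ⟨σ, hσC, hσ01, hσ0, hσ1, hσd, hσd0, hσc, hσcs, hσi⟩ := exists_step τ δ hδ
    obtain ⟨ρ, hρC, hρ01, hρ0, hρ1, hρd, hρd0, hρc, hρcs, hρi⟩ := exists_step T δ hδ
    obtain ⟨Iσ, Aσ⟩ := step_approx τ δ hδ hτ σ F (Cz τ) BF (hCz0 τ) hFm hFB (hFlip τ hτ)
      hσd hσd0 hσc hσcs hσi
    obtain ⟨Iρ, Aρ⟩ := step_approx T δ hδ (hτ.trans hT) ρ F (Cz T) BF (hCz0 T) hFm hFB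
      (hFlip T (hτ.trans hT)) hρd hρd0 hρc hρcs hρi
    set χ : ℝ → ℝ := fun t => σ t - ρ t with hχ
    have hχC : ContDiff ℝ 1 χ := hσC.sub hρC
    have hχ0 : ∀ t, t ∉ Icc (τ + δ) (T + 2 * δ) → χ t = 0 := by
      intro t ht
      rw [mem_Icc, not_and_or, not_le, not_le] at ht
      rcases ht with ht | ht
      · simp only [hχ]; rw [hσ0 t ht.le, hρ0 t (by linarith)]; ring
      · simp only [hχ]; rw [hσ1 t (by linarith), hρ1 t ht.le]; ring
    have hχcs : HasCompactSupport χ := HasCompactSupport.intro isCompact_Icc hχ0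
    have hχ1 : ∀ t, |χ t| ≤ 1 := by
      intro t
      rw [abs_le]
      constructor <;> simp only [hχ] <;> linarith [(hσ01 t).1, (hσ01 t).2, (hρ01 t).1, (hρ01 t).2]
    have hχd : ∀ t, deriv χ t = deriv σ t - deriv ρ t := fun t =>
      deriv_sub (hσC.differentiable (by norm_num) t) (hρC.differentiable (by norm_num) t)
    have hχdc : Continuous (deriv χ) := hχC.continuous_deriv le_rfl
    set φ : ℝ × ℝ → ℝ := fun p => χ p.1 * ψ (p.2 + (T - p.1) * lam) with hφ
    have hφC : ContDiff ℝ 1 φ := by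
      refine (hχC.comp contDiff_fst).mul (hψ.comp ?_)
      fun_prop
    have hφcs : HasCompactSupport φ := (shear_support χ ψ T lam hχC.continuous hψc hχcs hc).2
    have hφs : tsupport φ ⊆ Set.Ioi (0 : ℝ) ×ˢ Set.univ := by
      have : tsupport φ ⊆ Icc (τ + δ) (T + 2 * δ) ×ˢ (univ : Set ℝ) := by
        refine closure_minimal ?_ (isClosed_Icc.prod isClosed_univ)
        intro p hp
        refine ⟨?_, trivial⟩
        by_contra h
        exact (left_ne_zero_of_mul hp) (hχ0 _ h)
      refine this.trans (prod_mono ?_ le_rfl)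
      intro t ht
      exact lt_of_lt_of_le (by linarith) ht.1
    have hw := hweak φ hφC hφcs hφs
    have hpt : ∀ p : ℝ × ℝ, ptime φ p = deriv χ p.1 * ψ (p.2 + (T - p.1) * lam)
        - lam * (χ p.1 * deriv ψ (p.2 + (T - p.1) * lam)) := by
      rintro ⟨t, x⟩
      have hd1 : HasDerivAt χ (deriv χ t) t := (hχC.differentiable (by norm_num) t).hasDerivAt
      have hd2 : HasDerivAt ψ (deriv ψ (x + (T - t) * lam)) (x + (T - t) * lam) :=
        (hψ.differentiable (by norm_num) _).hasDerivAt
      have hd3 : HasDerivAt (fun s => x + (T - s) * lam) (-lam) t := by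
        have := (((hasDerivAt_id t).const_sub T).mul_const lam).const_add x
        simpa using this
      have := (hd1.mul (hd2.comp t hd3)).deriv
      simp only [ptime, hφ]
      refine Eq.trans this ?_
      simp only [Function.comp]
      ring
    have hps : ∀ p : ℝ × ℝ, pspace φ p = χ p.1 * deriv ψ (p.2 + (T - p.1) * lam) := by
      rintro ⟨t, x⟩
      have hd2 : HasDerivAt ψ (deriv ψ (x + (T - t) * lam)) (x + (T - t) * lam) :=
        (hψ.differentiable (by norm_num) _).hasDerivAt
      have hd3 : HasDerivAt (fun y => y + (T - t) * lam) 1 x := (hasDerivAt_id x).add_const _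
      have := ((hd2.comp x hd3).const_mul (χ t)).deriv
      simp only [pspace, hφ]
      refine Eq.trans this ?_
      ring
    obtain ⟨s1, s2⟩ := shear_support (deriv χ) ψ T lam hχdc hψc hχcs.deriv hc
    obtain ⟨s3, s4⟩ := shear_support χ (deriv ψ) T lam hχC.continuous hdc hχcs hdcs
    have I1 : Integrable (fun p : ℝ × ℝ =>
        deriv χ p.1 * ψ (p.2 + (T - p.1) * lam) * v p.1 p.2) (volume.prod volume) :=
      (s1.integrable_of_hasCompactSupport s2).mul_bdd (c := B) hvm.aestronglyMeasurable
        (Eventually.of_forall fun p => hvB _ _)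
    have I2 : Integrable (fun p : ℝ × ℝ =>
        χ p.1 * deriv ψ (p.2 + (T - p.1) * lam) * g p.1 p.2) (volume.prod volume) :=
      (s3.integrable_of_hasCompactSupport s4).mul_bdd (c := B) hgm.aestronglyMeasurable
        (Eventually.of_forall fun p => hgB _ _)
    have e1 : (∫ t, deriv χ t * F t) + ∫ t, χ t * G t = 0 := by
      have a1 := integral_prod _ I1
      have a2 := integral_prod _ I2
      simp only [mul_assoc, integral_const_mul] at a1 a2
      simp only [hF, hG]
      rw [← a1, ← a2, ← integral_add (by simpa only [mul_assoc] using I1)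
        (by simpa only [mul_assoc] using I2), ← hw, Measure.volume_eq_prod]
      congr 1; funext p
      rw [hpt, hps]; ring
    have e2 : ∫ t, deriv χ t * F t = (∫ t, deriv σ t * F t) - ∫ t, deriv ρ t * F t := by
      rw [← integral_sub Iσ Iρ]
      congr 1; funext t; rw [hχd]; ring
    have e3 : |∫ t, χ t * G t| ≤ (∫ t in τ..T, |G t|) + 2 * δ * BG := by
      have b1 : ∫ t, χ t * G t = ∫ t in τ..(T + 2 * δ), χ t * G t := by
        rw [intervalIntegral.integral_of_le (by linarith), ← integral_Icc_eq_integral_Ioc,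
          ← integral_indicator measurableSet_Icc]
        congr 1; funext t
        by_cases ht : t ∈ Icc τ (T + 2 * δ)
        · rw [indicator_of_mem ht]
        · rw [indicator_of_notMem ht, hχ0, zero_mul]
          intro h
          exact ht ⟨by linarith [h.1], h.2⟩
      rw [b1, ← Real.norm_eq_abs]
      refine (intervalIntegral.norm_integral_le_of_norm_le (g := fun t => |G t|) (by linarith)
        (Eventually.of_forall fun t _ => ?_) (hGI _ _)).trans ?_
      · rw [norm_mul, Real.norm_eq_abs, Real.norm_eq_abs]
        nlinarith [hχ1 t, abs_nonneg (G t)]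
      · rw [← intervalIntegral.integral_add_adjacent_intervals (hGI τ T) (hGI T (T + 2 * δ))]
        gcongr
        have := intervalIntegral.integral_mono_on (by linarith) (hGI T (T + 2 * δ))
          (by simp : IntervalIntegrable (fun _ => BG) volume T (T + 2 * δ)) (fun x _ => hGB x)
        refine this.trans (le_of_eq ?_)
        simp
    rw [abs_le] at Aσ Aρ e3 ⊢
    rw [e2] at e1
    constructor <;> nlinarith [Aσ.1, Aσ.2, Aρ.1, Aρ.2, e3.1, e3.2]
  have hFT : F T = ∫ x, ψ x * v T x := by simp [hF]
  rw [← hFT]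
  change |F T - F τ| ≤ ∫ t in τ..T, |G t|
  set Q := 2 * BG + 2 * Cz τ + 2 * Cz T with hQ
  have hlim : Tendsto (fun δ : ℝ => (∫ t in τ..T, |G t|) + δ * Q) (𝓝[>] 0)
      (𝓝 ((∫ t in τ..T, |G t|) + 0 * Q)) :=
    (Continuous.tendsto (by fun_prop) 0).mono_left nhdsWithin_le_nhds
  rw [zero_mul, add_zero] at hlim
  refine ge_of_tendsto hlim ?_
  filter_upwards [self_mem_nhdsWithin] with δ hδ
  exact main δ hδ

lemma bv_shift (g : ℝ → ℝ) (hgm : Measurable g) (V : ℝ) (hV0 : 0 ≤ V)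
    (hV : eVariationOn g univ ≤ ENNReal.ofReal V) (δ : ℝ) (hδ : 0 < δ) (p q : ℝ) (hpq : p ≤ q) :
    ∫ x in p..q, |g (x - δ) - g x| ≤ δ * V := by
  set N : ℝ → ℝ := fun x => (eVariationOn g (Iic x)).toReal with hN
  have hle : ∀ x, eVariationOn g (Iic x) ≤ ENNReal.ofReal V := fun x =>
    (eVariationOn.mono g (subset_univ _)).trans hV
  have hfin : ∀ x, eVariationOn g (Iic x) ≠ ⊤ := fun x =>
    ne_top_of_le_ne_top ENNReal.ofReal_ne_top (hle x)
  have hNmono : Monotone N := fun x y hxy =>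
    ENNReal.toReal_mono (hfin y) (eVariationOn.mono g (Iic_subset_Iic.2 hxy))
  have hN0 : ∀ x, 0 ≤ N x := fun x => ENNReal.toReal_nonneg
  have hNV : ∀ x, N x ≤ V := fun x => ENNReal.toReal_le_of_le_ofReal hV0 (hle x)
  have hpt : ∀ x, |g (x - δ) - g x| ≤ N x - N (x - δ) := by
    intro x
    have h1 : eVariationOn g (Iic (x - δ)) + eVariationOn g (Icc (x - δ) x) =
        eVariationOn g (Iic x) := by
      rw [← eVariationOn.union g (x := x - δ) isGreatest_Iic (isLeast_Icc (by linarith)),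
        Iic_union_Icc_eq_Iic (by linarith)]
    have h2 : edist (g (x - δ)) (g x) ≤ eVariationOn g (Icc (x - δ) x) :=
      eVariationOn.edist_le g ⟨le_rfl, by linarith⟩ ⟨by linarith, le_rfl⟩
    have h3 : N (x - δ) + (eVariationOn g (Icc (x - δ) x)).toReal = N x := by
      rw [hN]; dsimp only
      rw [← h1, ENNReal.toReal_add (hfin _)]
      exact ne_top_of_le_ne_top (hfin x) (eVariationOn.mono g Icc_subset_Iic_self)
    have h4 := ENNReal.toReal_mono
      (ne_top_of_le_ne_top (hfin x) (eVariationOn.mono g Icc_subset_Iic_self)) h2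
    rw [edist_dist, ENNReal.toReal_ofReal dist_nonneg, Real.dist_eq] at h4
    linarith
  have hNi : ∀ c d, IntervalIntegrable N volume c d := fun c d => hNmono.intervalIntegrable
  have hNi' : ∀ c d, IntervalIntegrable (fun x => N (x - δ)) volume c d := fun c d =>
    Monotone.intervalIntegrable (fun x y hxy => hNmono (by linarith))
  have hsub := fun c d => (hNi c d).sub (hNi' c d)
  have hgi : IntervalIntegrable (fun x => |g (x - δ) - g x|) volume p q := by
    refine (hsub p q).mono_fun ?_ ?_
    · exact (((hgm.comp (measurable_id.sub_const δ)).sub hgm).abs).aestronglyMeasurable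
    · refine Eventually.of_forall fun x => ?_
      simp only [Real.norm_eq_abs, abs_abs]
      exact (hpt x).trans (le_abs_self _)
  calc ∫ x in p..q, |g (x - δ) - g x| ≤ ∫ x in p..q, (N x - N (x - δ)) :=
        intervalIntegral.integral_mono_on hpq hgi (hsub p q) (fun x _ => hpt x)
    _ = (∫ x in p..q, N x) - ∫ x in (p - δ)..(q - δ), N x := by
        rw [intervalIntegral.integral_sub (hNi _ _) (hNi' _ _),
          intervalIntegral.integral_comp_sub_right]
    _ = (∫ x in (q - δ)..q, N x) - ∫ x in (p - δ)..p, N x := by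
        rw [intervalIntegral.integral_interval_sub_interval_comm' (hNi _ _) (hNi _ _) (hNi _ _)]
        
    _ ≤ (∫ x in (q - δ)..q, V) - 0 := by
        gcongr
        · exact intervalIntegral.integral_mono_on (by linarith) (hNi _ _) (by simp)
            (fun x _ => hNV x)
        · exact intervalIntegral.integral_nonneg (by linarith) (fun x _ => hN0 x)
    _ = δ * V := by simp

lemma bv_pairing (g ψ : ℝ → ℝ) (hgm : Measurable g) (B : ℝ) (hB : ∀ x, |g x| ≤ B)
    (c d V : ℝ) (hV0 : 0 ≤ V)
    (hV : eVariationOn g (Ioo c d) ≤ ENNReal.ofReal V)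
    (hψ : ContDiff ℝ 1 ψ) (hc : HasCompactSupport ψ) (hs : tsupport ψ ⊆ Ioo c d)
    (h1 : ∀ x, |ψ x| ≤ 1) : |∫ x, deriv ψ x * g x| ≤ V := by
  rcases (tsupport ψ).eq_empty_or_nonempty with he | hne
  · have : ψ = 0 := tsupport_eq_empty_iff.1 he
    subst this
    simpa using hV0
  obtain ⟨p, hp, hpmin⟩ := hc.isCompact.exists_isLeast hne
  obtain ⟨q, hq, hqmax⟩ := hc.isCompact.exists_isGreatest hne
  have hp' := hs hp
  have hq' := hs hq
  have hpq : p ≤ q := hpmin hq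
  set c' := (c + p) / 2 with hc'
  have hc1 : c < c' := by rw [hc']; linarith [hp'.1]
  have hc2 : c' < p := by rw [hc']; linarith [hp'.1]
  -- clamp
  set g1 : ℝ → ℝ := fun x => g (max c' (min x q)) with hg1
  have hg1m : Measurable g1 := hgm.comp (measurable_const.max (measurable_id.min measurable_const))
  have hg1V : eVariationOn g1 univ ≤ ENNReal.ofReal V := by
    refine le_trans ?_ hV
    refine eVariationOn.comp_le_of_monotoneOn g (fun x => max c' (min x q)) ?_ ?_
    · intro x _ y _ hxy
      exact max_le_max le_rfl (min_le_min hxy le_rfl)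
    · intro x _
      refine ⟨lt_max_of_lt_left hc1, max_lt (by linarith [hq'.2]) ?_⟩
      exact lt_of_le_of_lt (min_le_right _ _) hq'.2
  have hg1eq : ∀ x, c' ≤ x → x ≤ q → g1 x = g x := by
    intro x h1 h2
    simp [hg1, h1, h2]
  have hψ0 : ∀ x, x ∉ Icc p q → ψ x = 0 := by
    intro x hx
    by_contra h
    exact hx ⟨hpmin (subset_tsupport _ h), hqmax (subset_tsupport _ h)⟩
  have hψd0 : ∀ x, x ∉ Icc p q → deriv ψ x = 0 := by
    intro x hx
    by_contra h
    have := support_deriv_subset (f := ψ) (𝕜 := ℝ) h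
    exact hx ⟨hpmin this, hqmax this⟩
  have hg1B : ∀ x, |g1 x| ≤ B := fun x => hB _
  have hloc : LocallyIntegrable (fun x => g1 (-x)) volume := by
    refine (locallyIntegrable_const B).mono (hg1m.comp measurable_neg).aestronglyMeasurable ?_
    refine Eventually.of_forall fun x => ?_
    rw [Real.norm_eq_abs, Real.norm_eq_abs]
    exact (hg1B _).trans (le_abs_self _)
  have hder := HasCompactSupport.hasDerivAt_convolution_left (ContinuousLinearMap.mul ℝ ℝ)
    (μ := volume) hc hψ hloc 0
  set H := (convolution ψ (fun x => g1 (-x)) (ContinuousLinearMap.mul ℝ ℝ) volume) with hH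
  have hHy : ∀ y, H y = ∫ t, ψ t * g1 (t - y) := by
    intro y; simp [hH, convolution_def]
  have hval : (convolution (deriv ψ) (fun x => g1 (-x)) (ContinuousLinearMap.mul ℝ ℝ) volume) 0
      = ∫ x, deriv ψ x * g x := by
    simp only [convolution_def, ContinuousLinearMap.mul_apply', zero_sub, neg_neg]
    refine integral_congr_ae (Eventually.of_forall fun x => ?_)
    dsimp only
    by_cases hx : x ∈ Icc p q
    · rw [hg1eq x (by linarith [hx.1]) hx.2]
    · simp [hψd0 x hx]
  rw [hval] at hder
  have hint : ∀ y, Integrable (fun t => ψ t * g1 (t - y)) := by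
    intro y
    refine Integrable.mul_bdd (c := B) (hψ.continuous.integrable_of_hasCompactSupport hc)
      (hg1m.comp (measurable_id.sub_const y)).aestronglyMeasurable ?_
    exact Eventually.of_forall fun x => hg1B _
  have hest : ∀ δ, 0 < δ → |H δ - H 0| ≤ V * δ := by
    intro δ hδ
    rw [hHy, hHy, ← integral_sub (hint _) (hint _)]
    have e : ∀ t, ψ t * g1 (t - δ) - ψ t * g1 (t - 0) =
        (Icc p q).indicator (fun t => ψ t * (g1 (t - δ) - g1 t)) t := by
      intro t
      by_cases ht : t ∈ Icc p q
      · rw [indicator_of_mem ht, sub_zero]; ring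
      · rw [indicator_of_notMem ht, hψ0 t ht]; ring
    simp_rw [e]
    rw [integral_indicator measurableSet_Icc, integral_Icc_eq_integral_Ioc,
      ← intervalIntegral.integral_of_le hpq, mul_comm V]
    refine le_trans ?_ (bv_shift g1 hg1m V hV0 hg1V δ hδ p q hpq)
    rw [← Real.norm_eq_abs]
    refine intervalIntegral.norm_integral_le_of_norm_le hpq ?_ ?_
    · refine Eventually.of_forall fun t _ => ?_
      rw [norm_mul, Real.norm_eq_abs, Real.norm_eq_abs]
      nlinarith [h1 t, abs_nonneg (g1 (t - δ) - g1 t)]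
    · refine IntervalIntegrable.mono_fun (g := fun x => |g1 (x - δ) - g1 x|)
        (f := fun _ => 2 * B) (by simp) ?_ ?_
      · exact (((hg1m.comp (measurable_id.sub_const δ)).sub hg1m).abs).aestronglyMeasurable
      · refine Eventually.of_forall fun x => ?_
        simp only [Real.norm_eq_abs, abs_abs]
        refine le_trans (abs_sub _ _) (le_trans ?_ (le_abs_self _))
        linarith [hg1B (x - δ), hg1B x]
  have ht : Tendsto (fun δ => |(H δ - H 0) / δ|) (𝓝[>] 0) (𝓝 |∫ x, deriv ψ x * g x|) := by
    have := (hasDerivAt_iff_tendsto_slope.1 hder).mono_left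
      (nhdsWithin_mono (0:ℝ) (show Ioi (0:ℝ) ⊆ {0}ᶜ from fun x hx => ne_of_gt hx))
    refine this.abs.congr' (Eventually.of_forall fun x => ?_)
    simp [slope_def_field]
  refine le_of_tendsto ht ?_
  filter_upwards [self_mem_nhdsWithin] with δ hδ
  have hδ' : (0:ℝ) < δ := hδ
  rw [abs_div, abs_of_pos hδ', div_le_iff₀ hδ']
  exact hest δ hδ'

lemma l1_duality (D : ℝ → ℝ) (hDm : Measurable D) (hD : Integrable D) (c d B : ℝ)
    (hB : ∀ ψ : ℝ → ℝ, ContDiff ℝ 1 ψ → HasCompactSupport ψ → tsupport ψ ⊆ Ioo c d →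
      (∀ x, |ψ x| ≤ 1) → |∫ x, ψ x * D x| ≤ B) :
    ∫ x in Ioo c d, |D x| ≤ B := by
  -- first on compact subintervals
  have key : ∀ η, 0 < η → ∫ x in Icc (c + η) (d - η), |D x| ≤ B := by
    intro η hη
    set s : ℝ → ℝ := (Icc (c + η) (d - η)).indicator (fun x => SignType.sign (D x) : ℝ → ℝ) with hs
    have hsm : Measurable s := by
      refine Measurable.indicator ?_ measurableSet_Icc
      have : (fun x => ((SignType.sign (D x) : SignType) : ℝ)) =
          fun x => if 0 < D x then (1:ℝ) else if D x < 0 then -1 else 0 := by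
        funext x
        rcases lt_trichotomy (D x) 0 with h | h | h
        · simp [h, not_lt.2 h.le]
        · simp [h]
        · simp [h]
      rw [this]
      exact Measurable.ite (measurableSet_lt measurable_const hDm) measurable_const
        (Measurable.ite (measurableSet_lt hDm measurable_const) measurable_const measurable_const)
    have hs1 : ∀ x, |s x| ≤ 1 := by
      intro x
      by_cases hx : x ∈ Icc (c + η) (d - η)
      · rw [hs, indicator_of_mem hx]
        rcases lt_trichotomy (D x) 0 with h | h | h <;> simp [h]
      · rw [hs, indicator_of_notMem hx]; simp
    have hs0 : ∀ x, x ∉ Icc (c + η) (d - η) → s x = 0 := fun x hx => indicator_of_notMem hx _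
    have hsloc : LocallyIntegrable s volume := by
      refine (locallyIntegrable_const (1:ℝ)).mono hsm.aestronglyMeasurable ?_
      refine Eventually.of_forall fun x => ?_
      simpa using hs1 x
    let φ : ℕ → ContDiffBump (0 : ℝ) := fun k =>
      { rIn := η / (4 * (k + 1)), rOut := η / (2 * (k + 1)), rIn_pos := by positivity,
        rIn_lt_rOut := by
          apply div_lt_div_of_pos_left hη (by positivity)
          have : (0:ℝ) ≤ k := Nat.cast_nonneg k
          linarith }
    have hφ0 : Tendsto (fun k => (φ k).rOut) atTop (𝓝 0) := by
      have h := tendsto_one_div_add_atTop_nhds_zero_nat (𝕜 := ℝ)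
      have h2 := h.const_mul (η / 2)
      rw [mul_zero] at h2
      refine h2.congr (fun k => ?_)
      change η / 2 * (1 / ((k:ℝ) + 1)) = η / (2 * (k + 1))
      field_simp
    have hφK : ∀ᶠ k in atTop, (φ k).rOut ≤ 2 * (φ k).rIn := by
      refine Eventually.of_forall fun k => ?_
      change η / (2 * (k + 1)) ≤ 2 * (η / (4 * (k + 1)))
      apply le_of_eq
      field_simp
      norm_num
    have hφη : ∀ k, (φ k).rOut < η := by
      intro k
      change η / (2 * (k + 1)) < η
      have : (0:ℝ) ≤ k := Nat.cast_nonneg k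
      rw [div_lt_iff₀ (by positivity)]
      nlinarith
    have hae := ContDiffBump.ae_convolution_tendsto_right_of_locallyIntegrable (μ := volume)
      hφ0 hφK hsloc
    set ψ : ℕ → ℝ → ℝ := fun k => convolution ((φ k).normed volume) s
      (ContinuousLinearMap.lsmul ℝ ℝ) volume with hψ
    have hψC : ∀ k, ContDiff ℝ 1 (ψ k) := fun k =>
      HasCompactSupport.contDiff_convolution_left _ (φ k).hasCompactSupport_normed
        (φ k).contDiff_normed hsloc
    have hψ1 : ∀ k x, |ψ k x| ≤ 1 := by
      intro k x
      simp only [hψ, convolution_def, ContinuousLinearMap.lsmul_apply, smul_eq_mul]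
      rw [← Real.norm_eq_abs, ← (φ k).integral_normed (μ := volume)]
      refine norm_integral_le_of_norm_le (φ k).integrable_normed
        (Eventually.of_forall fun t => ?_)
      rw [norm_mul, Real.norm_eq_abs, Real.norm_eq_abs, abs_of_nonneg ((φ k).nonneg_normed t)]
      nlinarith [hs1 (x - t), (φ k).nonneg_normed (μ := volume) t]
    have hψsupp : ∀ k, tsupport (ψ k) ⊆ Icc (c + (η - (φ k).rOut)) (d - (η - (φ k).rOut)) := by
      intro k
      refine closure_minimal ?_ isClosed_Icc
      intro x hx
      have h := support_convolution_subset (ContinuousLinearMap.lsmul ℝ ℝ) hx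
      obtain ⟨y, hy, z, hz, rfl⟩ := h
      have hy' : |y| < (φ k).rOut := by
        simpa [(φ k).support_normed_eq] using hy
      have hz' : z ∈ Icc (c + η) (d - η) := by
        by_contra h
        exact hz (hs0 z h)
      rw [abs_lt] at hy'
      constructor <;> simp only <;> linarith [hz'.1, hz'.2, hy'.1, hy'.2]
    have hbound : ∀ k, |∫ x, ψ k x * D x| ≤ B := by
      intro k
      refine hB (ψ k) (hψC k) ?_ ?_ (hψ1 k)
      · exact isCompact_Icc.of_isClosed_subset (isClosed_tsupport _) (hψsupp k)
      · refine (hψsupp k).trans ?_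
        intro x hx
        constructor <;> linarith [hx.1, hx.2, hφη k]
    have hlim : Tendsto (fun k => ∫ x, ψ k x * D x) atTop (𝓝 (∫ x, s x * D x)) := by
      refine tendsto_integral_of_dominated_convergence (fun x => |D x|) ?_ hD.abs ?_ ?_
      · intro k
        exact ((hψC k).continuous.measurable.mul hDm).aestronglyMeasurable
      · intro k
        refine Eventually.of_forall fun x => ?_
        rw [norm_mul, Real.norm_eq_abs, Real.norm_eq_abs]
        nlinarith [hψ1 k x, abs_nonneg (D x)]
      · filter_upwards [hae] with x hx
        exact hx.mul_const _
    have hfin : ∫ x, s x * D x = ∫ x in Icc (c + η) (d - η), |D x| := by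
      rw [← integral_indicator measurableSet_Icc]
      refine integral_congr_ae (Eventually.of_forall fun x => ?_)
      by_cases hx : x ∈ Icc (c + η) (d - η)
      · simp only [hs, indicator_of_mem hx]
        exact sign_mul_self (D x)
      · simp only [hs, indicator_of_notMem hx, zero_mul]
    rw [← hfin]
    exact le_of_tendsto hlim (Eventually.of_forall fun k => (le_abs_self _).trans (hbound k))
  have hcov : AECover (volume.restrict (Ioo c d)) (𝓝[>] (0:ℝ))
      (fun η => Icc (c + η) (d - η)) := by
    refine aecover_Ioo_of_Icc ?_ ?_
    · have : Tendsto (fun η : ℝ => c + η) (𝓝 0) (𝓝 (c + 0)) := by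
        exact (continuous_const.add continuous_id).tendsto 0
      rw [add_zero] at this
      exact this.mono_left nhdsWithin_le_nhds
    · have : Tendsto (fun η : ℝ => d - η) (𝓝 0) (𝓝 (d - 0)) := by
        exact (continuous_const.sub continuous_id).tendsto 0
      rw [sub_zero] at this
      exact this.mono_left nhdsWithin_le_nhds
  have hl := hcov.integral_tendsto_of_countably_generated (f := fun x => |D x|)
    hD.abs.integrableOn
  refine le_of_tendsto hl ?_
  filter_upwards [self_mem_nhdsWithin] with η hη
  have hη' : (0:ℝ) < η := hη
  rw [Measure.restrict_restrict measurableSet_Icc]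
  refine le_trans ?_ (key η hη')
  refine setIntegral_mono_set hD.abs.integrableOn (Eventually.of_forall fun x => abs_nonneg _) ?_
  exact Eventually.of_forall inter_subset_left

lemma eig_expand {n : ℕ} (r l : Fin n → EuclideanSpace ℝ (Fin n))
    (hdual : ∀ i j, ⟪l i, r j⟫ = if i = j then (1 : ℝ) else 0) :
    ∃ b : Module.Basis (Fin n) ℝ (EuclideanSpace ℝ (Fin n)), (∀ i, b i = r i) ∧
      ∀ w, w = ∑ i, ⟪l i, w⟫ • r i := by
  have hli : LinearIndependent ℝ r := by
    rw [Fintype.linearIndependent_iff]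
    intro c hc i
    have := congrArg (fun w => ⟪l i, w⟫) hc
    simpa [inner_sum, inner_smul_right, hdual] using this
  rcases isEmpty_or_nonempty (Fin n) with he | hne
  · have : n = 0 := by
      rcases Nat.eq_zero_or_pos n with h | h
      · exact h
      · exact (he.false ⟨0, h⟩).elim
    subst this
    refine ⟨(EuclideanSpace.basisFun (Fin 0) ℝ).toBasis, fun i => i.elim0, fun w => ?_⟩
    exact Subsingleton.elim _ _
  let b := basisOfLinearIndependentOfCardEqFinrank hli (by simp)
  have hb : ∀ i, b i = r i := fun i => by simp [b]
  refine ⟨b, hb, fun w => ?_⟩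
  have h1 := b.sum_repr w
  have h2 : ∀ i, ⟪l i, w⟫ = b.repr w i := by
    intro i
    conv_lhs => rw [← h1]
    simp [inner_sum, inner_smul_right, hb, hdual]
  conv_lhs => rw [← h1]
  simp [h2, hb]

lemma det_eig {n : ℕ} (A : EuclideanSpace ℝ (Fin n) →L[ℝ] EuclideanSpace ℝ (Fin n))
    (lam : Fin n → ℝ) (b : Module.Basis (Fin n) ℝ (EuclideanSpace ℝ (Fin n)))
    (h : ∀ i, A (b i) = lam i • b i) (s : ℝ) :
    (s • (1 : EuclideanSpace ℝ (Fin n) →L[ℝ] EuclideanSpace ℝ (Fin n)) - A).det =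
      ∏ i, (s - lam i) := by
  rw [ContinuousLinearMap.det, ← LinearMap.det_toMatrix b, ← Matrix.det_diagonal]
  congr 1
  ext i j
  rw [LinearMap.toMatrix_apply]
  simp only [ContinuousLinearMap.coe_coe, sub_apply,
    smul_apply, one_apply_eq_self, h, ← sub_smul]
  simp only [map_smul, Module.Basis.repr_self, Finsupp.smul_single, smul_eq_mul, mul_one,
    Matrix.diagonal_apply, Finsupp.single_apply]
  by_cases hij : i = j
  · subst hij; simp
  · simp [hij, Ne.symm hij]

lemma inj_of_prod_eq {n : ℕ} (lam mu : Fin n → ℝ) (hl : Function.Injective lam)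
    (h : ∀ s : ℝ, ∏ i, (s - mu i) = ∏ i, (s - lam i)) : Function.Injective mu := by
  have hp : ∏ i, (Polynomial.X - Polynomial.C (mu i)) =
      ∏ i, (Polynomial.X - Polynomial.C (lam i)) := by
    apply Polynomial.funext
    intro s
    simpa [Polynomial.eval_prod] using h s
  have hr := congrArg Polynomial.roots hp
  have e : ∀ m : Fin n → ℝ, (∏ i, (Polynomial.X - Polynomial.C (m i))).roots =
      Finset.univ.val.map m := by
    intro m
    have := Polynomial.roots_multiset_prod_X_sub_C (Finset.univ.val.map m)
    rw [← this, Multiset.map_map]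
    rfl
  rw [e, e] at hr
  have hnd : (Finset.univ.val.map lam).Nodup := Multiset.Nodup.map hl Finset.univ.nodup
  rw [← hr] at hnd
  intro i j hij
  exact Multiset.inj_on_of_nodup_map hnd i (Finset.mem_univ i) j (Finset.mem_univ j) hij

lemma list_eig {E : Type*} [NormedAddCommGroup E] [NormedSpace ℝ E] {ι : Type*}
    (T : ι → E →L[ℝ] E) (c : ι → ℝ) (x : E) (h : ∀ j, T j x = c j • x) (L : List ι) :
    (L.map T).prod x = (L.map c).prod • x := by
  induction L with
  | nil => simp
  | cons a L ih => simp [ih, h, smul_smul, mul_comm]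

lemma proj_bound {n : ℕ}
    (A : EuclideanSpace ℝ (Fin n) → EuclideanSpace ℝ (Fin n) →L[ℝ] EuclideanSpace ℝ (Fin n))
    (hA : Continuous A) (lam : Fin n → EuclideanSpace ℝ (Fin n) → ℝ)
    (r l : Fin n → EuclideanSpace ℝ (Fin n) → EuclideanSpace ℝ (Fin n))
    (hinj : ∀ v, Function.Injective fun i => lam i v)
    (hspeeds : ∀ i v, lam i v ∈ Set.Icc (-1 : ℝ) 1)
    (hright : ∀ i v, A v (r i v) = lam i v • r i v)
    (hdual : ∀ i j v, ⟪l i v, r j v⟫ = if i = j then (1 : ℝ) else 0)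
    (K : Set (EuclideanSpace ℝ (Fin n))) (hK : IsCompact K) :
    ∃ B : ℝ, 0 ≤ B ∧ ∀ v ∈ K, ∀ i, ‖l i v‖ * ‖r i v‖ ≤ B := by
  set S : Set (EuclideanSpace ℝ (Fin n) × (Fin n → ℝ)) :=
    (K ×ˢ (Set.univ.pi fun _ => Icc (-1:ℝ) 1)) ∩ {p | ∀ s : ℝ,
      (s • (1 : EuclideanSpace ℝ (Fin n) →L[ℝ] EuclideanSpace ℝ (Fin n)) - A p.1).det =
      ∏ i, (s - p.2 i)} with hS
  have hSc : IsCompact S := by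
    refine (hK.prod (isCompact_univ_pi fun _ => isCompact_Icc)).inter_right ?_
    rw [ofPred_forall]
    refine isClosed_iInter fun s => isClosed_eq ?_ (by fun_prop)
    exact ContinuousLinearMap.continuous_det.comp
      (continuous_const.sub (hA.comp continuous_fst))
  have hdet : ∀ v s, (s • (1 : EuclideanSpace ℝ (Fin n) →L[ℝ] EuclideanSpace ℝ (Fin n)) -
      A v).det = ∏ i, (s - lam i v) := by
    intro v s
    obtain ⟨b, hb, -⟩ := eig_expand (fun i => r i v) (fun i => l i v) (fun i j => hdual i j v)
    exact det_eig (A v) (fun i => lam i v) b (fun i => by rw [hb]; exact hright i v) s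
  have hSinj : ∀ p ∈ S, Function.Injective p.2 := by
    intro p hp
    refine inj_of_prod_eq (fun i => lam i p.1) p.2 (hinj p.1) fun s => ?_
    rw [← hp.2 s, hdet]
  have hmem : ∀ v ∈ K, (v, fun i => lam i v) ∈ S := by
    intro v hv
    exact ⟨⟨hv, fun i _ => hspeeds i v⟩, fun s => hdet v s⟩
  let T : Fin n → EuclideanSpace ℝ (Fin n) × (Fin n → ℝ) → Fin n →
      (EuclideanSpace ℝ (Fin n) →L[ℝ] EuclideanSpace ℝ (Fin n)) := fun i p j =>
    if j = i then 1 else (p.2 i - p.2 j)⁻¹ • (A p.1 - p.2 j • 1)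
  have hTc : ∀ i, ContinuousOn (fun p => ((List.finRange n).map (T i p)).prod) S := by
    intro i
    refine continuousOn_list_prod (f := fun j p => T i p j) (List.finRange n) fun j _ => ?_
    by_cases hji : j = i
    · simp only [T, hji, if_true]; exact continuousOn_const
    · simp only [T, hji, if_false]
      have hcd : Continuous (fun p : EuclideanSpace ℝ (Fin n) × (Fin n → ℝ) => p.2 i - p.2 j) := by
        fun_prop
      refine ContinuousOn.smul (hcd.continuousOn.inv₀ ?_) ?_
      · intro p hp h0
        exact hji (hSinj p hp (sub_eq_zero.1 h0)).symm
      · refine Continuous.continuousOn ?_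
        exact (hA.comp continuous_fst).sub
          (((continuous_apply j).comp continuous_snd).smul continuous_const)
  have hbd : ∀ i, ∃ C, ∀ p ∈ S, ‖((List.finRange n).map (T i p)).prod‖ ≤ C := fun i =>
    hSc.exists_bound_of_continuousOn (hTc i)
  choose C hC using hbd
  refine ⟨∑ i, |C i|, Finset.sum_nonneg fun i _ => abs_nonneg _, fun v hv i => ?_⟩
  have hle : C i ≤ ∑ i, |C i| := (le_abs_self _).trans
    (Finset.single_le_sum (f := fun i => |C i|) (fun i _ => abs_nonneg _) (Finset.mem_univ i))
  refine le_trans ?_ hle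
  have hQ := hC i _ (hmem v hv)
  set Q := ((List.finRange n).map (T i (v, fun i => lam i v))).prod with hQdef
  have hQr : ∀ k, Q (r k v) = if k = i then r k v else 0 := by
    intro k
    have := list_eig (T i (v, fun i => lam i v))
      (fun j => if j = i then 1 else (lam i v - lam j v)⁻¹ * (lam k v - lam j v)) (r k v)
      (fun j => by
        by_cases hji : j = i
        · simp [T, hji]
        · simp [T, hji, hright, ← sub_smul, smul_smul]) (List.finRange n)
    rw [hQdef, this]
    by_cases hki : k = i
    · subst hki
      rw [if_pos rfl]
      have : ∀ j, (if j = k then (1:ℝ) else (lam k v - lam j v)⁻¹ * (lam k v - lam j v)) = 1 := by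
        intro j
        by_cases hjk : j = k
        · simp [hjk]
        · rw [if_neg hjk, inv_mul_cancel₀]
          intro h0
          exact hjk (hinj v (sub_eq_zero.1 h0)).symm
      simp [this]
    · rw [if_neg hki]
      have : (List.map (fun j => if j = i then (1:ℝ) else (lam i v - lam j v)⁻¹ *
          (lam k v - lam j v)) (List.finRange n)).prod = 0 := by
        apply List.prod_eq_zero
        rw [List.mem_map]
        exact ⟨k, List.mem_finRange k, by simp [hki]⟩
      rw [this, zero_smul]
  obtain ⟨b, hb, hexp⟩ := eig_expand (fun i => r i v) (fun i => l i v) (fun i j => hdual i j v)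
  have hQw : ∀ w, Q w = ⟪l i v, w⟫ • r i v := by
    intro w
    conv_lhs => rw [hexp w]
    simp [hQr]
  have h1 := Q.le_opNorm (l i v)
  rw [hQw, real_inner_self_eq_norm_sq, norm_smul, Real.norm_eq_abs, abs_of_nonneg (sq_nonneg _)] at h1
  by_cases h0 : ‖l i v‖ = 0
  · rw [h0, zero_mul]
    exact (norm_nonneg _).trans hQ
  · have hpos : 0 < ‖l i v‖ := lt_of_le_of_ne (norm_nonneg _) (Ne.symm h0)
    have : ‖l i v‖ * (‖l i v‖ * ‖r i v‖) ≤ ‖l i v‖ * C i := by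
      nlinarith
    exact le_of_mul_le_mul_left this hpos

lemma fderiv_lip_ball {E : Type*} [NormedAddCommGroup E] [NormedSpace ℝ E] [ProperSpace E]
    (f : E → E) (hf : ContDiff ℝ 2 f) (R : ℝ) : ∃ L : ℝ, 0 ≤ L ∧
      ∀ w₀ ∈ Metric.closedBall (0 : E) R, ∀ w ∈ Metric.closedBall (0 : E) R,
      ‖fderiv ℝ f w - fderiv ℝ f w₀‖ ≤ L * ‖w - w₀‖ := by
  have hd : ContDiff ℝ 1 (fderiv ℝ f) := hf.fderiv_right (by norm_num)
  have hdd : Continuous (fderiv ℝ (fderiv ℝ f)) := hd.continuous_fderiv (by norm_num)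
  obtain ⟨L, hL⟩ := (isCompact_closedBall (0 : E) R).exists_bound_of_continuousOn hdd.continuousOn
  refine ⟨|L|, abs_nonneg L, fun w₀ hw₀ w hw => ?_⟩
  exact Convex.norm_image_sub_le_of_norm_fderiv_le (𝕜 := ℝ)
    (fun x _ => hd.differentiable (by norm_num) x)
    (fun x hx => (hL x hx).trans (le_abs_self L)) (convex_closedBall _ _) hw₀ hw

lemma flux_lip {n : ℕ} (f : EuclideanSpace ℝ (Fin n) → EuclideanSpace ℝ (Fin n))
    (hf : ContDiff ℝ 2 f) (R : ℝ) : ∃ L : ℝ, 0 ≤ L ∧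
      ∀ w₀ ∈ Metric.closedBall (0 : EuclideanSpace ℝ (Fin n)) R, ∀ ρ : ℝ, 0 ≤ ρ →
      ∀ ℓ : EuclideanSpace ℝ (Fin n),
      LipschitzOnWith (Real.toNNReal (‖ℓ‖ * (L * ρ))) (fun w => ⟪ℓ, f w - fderiv ℝ f w₀ w⟫)
        (Metric.closedBall 0 R ∩ Metric.closedBall w₀ ρ) := by
  have hd : ContDiff ℝ 1 (fderiv ℝ f) := hf.fderiv_right (by norm_num)
  obtain ⟨L, hL0, h0⟩ := fderiv_lip_ball f hf R
  refine ⟨L, hL0, fun w₀ hw₀ ρ hρ ℓ => ?_⟩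
  have h1 : ∀ w ∈ Metric.closedBall (0 : EuclideanSpace ℝ (Fin n)) R,
      ‖fderiv ℝ f w - fderiv ℝ f w₀‖ ≤ L * ‖w - w₀‖ := fun w hw => h0 w₀ hw₀ w hw
  refine LipschitzOnWith.of_dist_le_mul fun x hx y hy => ?_
  rw [Real.coe_toNNReal _ (by positivity), dist_eq_norm, dist_eq_norm, ← inner_sub_right]
  refine (norm_inner_le_norm _ _).trans ?_
  rw [mul_assoc]
  refine mul_le_mul_of_nonneg_left ?_ (norm_nonneg _)
  have hdiff : ∀ z, HasFDerivAt (fun w => f w - fderiv ℝ f w₀ w)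
      (fderiv ℝ f z - fderiv ℝ f w₀) z := fun z =>
    ((hf.differentiable (by norm_num) z).hasFDerivAt).sub (fderiv ℝ f w₀).hasFDerivAt
  refine Convex.norm_image_sub_le_of_norm_hasFDerivWithin_le (𝕜 := ℝ)
    (f := fun w => f w - fderiv ℝ f w₀ w)
    (fun z _ => (hdiff z).hasFDerivWithinAt) ?_
    ((convex_closedBall (0 : EuclideanSpace ℝ (Fin n)) R).inter (convex_closedBall w₀ ρ)) hy hx
  intro z hz
  refine (h1 z hz.1).trans ?_
  have := hz.2
  rw [Metric.mem_closedBall, dist_eq_norm] at this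
  gcongr

lemma ptime_eq (φ : ℝ × ℝ → ℝ) (hφ : ContDiff ℝ 1 φ) (p : ℝ × ℝ) :
    ptime φ p = fderiv ℝ φ p (1, 0) := by
  have h1 : HasFDerivAt φ (fderiv ℝ φ p) (p.1, p.2) := (hφ.differentiable (by norm_num) p).hasFDerivAt
  have h2 : HasDerivAt (fun s : ℝ => (s, p.2)) ((1 : ℝ), (0 : ℝ)) p.1 :=
    (hasDerivAt_id p.1).prodMk (hasDerivAt_const p.1 p.2)
  exact (h1.comp_hasDerivAt p.1 h2).deriv

lemma pspace_eq (φ : ℝ × ℝ → ℝ) (hφ : ContDiff ℝ 1 φ) (p : ℝ × ℝ) :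
    pspace φ p = fderiv ℝ φ p (0, 1) := by
  have h1 : HasFDerivAt φ (fderiv ℝ φ p) (p.1, p.2) := (hφ.differentiable (by norm_num) p).hasFDerivAt
  have h2 : HasDerivAt (fun s : ℝ => (p.1, s)) ((0 : ℝ), (1 : ℝ)) p.2 :=
    (hasDerivAt_const p.2 p.1).prodMk (hasDerivAt_id p.2)
  exact (h1.comp_hasDerivAt p.2 h2).deriv

lemma weak_component {n : ℕ} (f : EuclideanSpace ℝ (Fin n) → EuclideanSpace ℝ (Fin n))
    (hf : Continuous f) (R : ℝ) (u : ℝ → ℝ → EuclideanSpace ℝ (Fin n))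
    (hum : Measurable (Function.uncurry u)) (huR : ∀ t x, ‖u t x‖ ≤ R)
    (hweak : ∀ φ : ℝ × ℝ → ℝ, ContDiff ℝ 1 φ → HasCompactSupport φ →
        tsupport φ ⊆ Set.Ioi (0 : ℝ) ×ˢ Set.univ →
        ∫ p : ℝ × ℝ, (ptime φ p • u p.1 p.2 + pspace φ p • f (u p.1 p.2)) = 0)
    (ℓ : EuclideanSpace ℝ (Fin n)) (φ : ℝ × ℝ → ℝ) (hφ : ContDiff ℝ 1 φ)
    (hc : HasCompactSupport φ) (hs : tsupport φ ⊆ Set.Ioi (0 : ℝ) ×ˢ Set.univ) :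
    ∫ p : ℝ × ℝ, (ptime φ p * ⟪ℓ, u p.1 p.2⟫ + pspace φ p * ⟪ℓ, f (u p.1 p.2)⟫) = 0 := by
  obtain ⟨Cf, hCf⟩ := (isCompact_closedBall (0 : EuclideanSpace ℝ (Fin n)) R).exists_bound_of_continuousOn
    hf.continuousOn
  have hcd : Continuous (fderiv ℝ φ) := hφ.continuous_fderiv (by norm_num)
  have ht : ptime φ = fun p => fderiv ℝ φ p (1, 0) := funext (ptime_eq φ hφ)
  have hx : pspace φ = fun p => fderiv ℝ φ p (0, 1) := funext (pspace_eq φ hφ)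
  have i1 : Integrable (ptime φ) := by
    rw [ht]
    exact (hcd.clm_apply continuous_const).integrable_of_hasCompactSupport
      (hc.fderiv_apply (𝕜 := ℝ) _)
  have i2 : Integrable (pspace φ) := by
    rw [hx]
    exact (hcd.clm_apply continuous_const).integrable_of_hasCompactSupport
      (hc.fderiv_apply (𝕜 := ℝ) _)
  have hfum : Measurable (fun p : ℝ × ℝ => f (u p.1 p.2)) := hf.measurable.comp hum
  have j1 : Integrable (fun p : ℝ × ℝ => ptime φ p • u p.1 p.2) :=
    i1.smul_bdd (C := R) hum.aestronglyMeasurable (Eventually.of_forall fun p => huR _ _)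
  have j2 : Integrable (fun p : ℝ × ℝ => pspace φ p • f (u p.1 p.2)) :=
    i2.smul_bdd (C := Cf) hfum.aestronglyMeasurable (Eventually.of_forall fun p =>
      hCf _ (by simpa using huR _ _))
  have h := integral_inner (𝕜 := ℝ) (j1.add j2) ℓ
  have h0 := hweak φ hφ hc hs
  simp only [Pi.add_apply] at h
  rw [h0, inner_zero_right] at h
  rw [← h]
  congr 1; funext p
  rw [inner_add_right, inner_smul_right, inner_smul_right]

set_option maxHeartbeats 2000000 in
lemma component_estimate {n : ℕ} (f : EuclideanSpace ℝ (Fin n) → EuclideanSpace ℝ (Fin n))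
    (hf : ContDiff ℝ 2 f) (R L : ℝ) (hL : 0 ≤ L)
    (hLip : ∀ w₀ ∈ Metric.closedBall (0 : EuclideanSpace ℝ (Fin n)) R, ∀ ρ : ℝ, 0 ≤ ρ →
      ∀ ℓ : EuclideanSpace ℝ (Fin n),
      LipschitzOnWith (Real.toNNReal (‖ℓ‖ * (L * ρ))) (fun w => ⟪ℓ, f w - fderiv ℝ f w₀ w⟫)
        (Metric.closedBall 0 R ∩ Metric.closedBall w₀ ρ))
    (M : ℝ) (hM : 0 < M) (u : ℝ → ℝ → EuclideanSpace ℝ (Fin n))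
    (hum : Measurable (Function.uncurry u)) (huR : ∀ t x, ‖u t x‖ ≤ R)
    (hui : ∀ t : ℝ, Integrable (u t))
    (hul : ∀ s t : ℝ, 0 ≤ s → 0 ≤ t → (∫ x : ℝ, ‖u t x - u s x‖) ≤ M * |t - s|)
    (hweak : ∀ φ : ℝ × ℝ → ℝ, ContDiff ℝ 1 φ → HasCompactSupport φ →
        tsupport φ ⊆ Set.Ioi (0 : ℝ) ×ˢ Set.univ →
        ∫ p : ℝ × ℝ, (ptime φ p • u p.1 p.2 + pspace φ p • f (u p.1 p.2)) = 0)
    (τ a b ε ξ : ℝ) (hτ : 0 ≤ τ) (hε : 0 < ε) (hξ : ξ ∈ Set.Ioo a b)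
    (hTV : ∀ t : ℝ, 0 ≤ t → eVariationOn (u t) Set.univ ≤ ENNReal.ofReal M)
    (hTVτ : eVariationOn (u τ) (Set.Ioo a b) ≤ ENNReal.ofReal ε)
    (ℓ : EuclideanSpace ℝ (Fin n)) (lam : ℝ) (hlam : lam ∈ Icc (-1 : ℝ) 1)
    (hleft : ∀ w, ⟪ℓ, fderiv ℝ f (u τ ξ) w⟫ = lam * ⟪ℓ, w⟫)
    (h : ℝ) (hh : 0 < h) (hh1 : h < (b - a) / 4) (hh2 : M * h < ε * ((b - a) / 2)) :
    ∫ x in Ioo (a + h) (b - h), |⟪ℓ, u (τ + h) x⟫ - ⟪ℓ, u τ (x - h * lam)⟫| ≤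
      ‖ℓ‖ * (8 * L * ε ^ 2 * h + 2 * R * L * M * (volume {t ∈ Set.Icc τ (τ + h) |
            2 * ε < (eVariationOn (u t)
              (Set.Ioo (a + (t - τ)) (b - (t - τ)))).toReal}).toReal) := by
  have hR : 0 ≤ R := (norm_nonneg _).trans (huR 0 0)
  set A := fderiv ℝ f (u τ ξ) with hA
  set bad : Set ℝ := {t ∈ Set.Icc τ (τ + h) |
            2 * ε < (eVariationOn (u t)
              (Set.Ioo (a + (t - τ)) (b - (t - τ)))).toReal} with hbad
  have hut : ∀ t, Measurable (u t) := fun t => hum.comp measurable_prodMk_left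
  set v : ℝ → ℝ → ℝ := fun t x => ⟪ℓ, u t x⟫ with hv
  set g : ℝ → ℝ → ℝ := fun t x => ⟪ℓ, f (u t x) - A (u t x)⟫ with hg
  obtain ⟨Cf, hCf⟩ := (isCompact_closedBall (0 : EuclideanSpace ℝ (Fin n)) R).exists_bound_of_continuousOn
    (hf.continuous.sub A.continuous).continuousOn
  have hvm : Measurable (Function.uncurry v) := by
    have : Continuous (fun w : EuclideanSpace ℝ (Fin n) => ⟪ℓ, w⟫) := by fun_prop
    exact this.measurable.comp hum
  have hgm : Measurable (Function.uncurry g) := by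
    have : Continuous (fun w : EuclideanSpace ℝ (Fin n) => ⟪ℓ, f w - A w⟫) :=
      continuous_const.inner (hf.continuous.sub A.continuous)
    exact this.measurable.comp hum
  have hvm' : ∀ t, Measurable (v t) := fun t => hvm.comp measurable_prodMk_left
  have hgm' : ∀ t, Measurable (g t) := fun t => hgm.comp measurable_prodMk_left
  have hvB : ∀ t x, |v t x| ≤ ‖ℓ‖ * (R + |Cf|) := by
    intro t x
    refine (abs_real_inner_le_norm _ _).trans ?_
    gcongr
    linarith [huR t x, abs_nonneg Cf]
  have hgB : ∀ t x, |g t x| ≤ ‖ℓ‖ * (R + |Cf|) := by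
    intro t x
    refine (abs_real_inner_le_norm _ _).trans ?_
    gcongr
    have := hCf (u t x) (by simpa using huR t x)
    simp only [Pi.sub_apply] at this
    linarith [le_abs_self Cf]
  have hvi : ∀ t, Integrable (v t) := fun t => (hui t).const_inner ℓ
  have hvl : ∀ s t : ℝ, 0 ≤ s → 0 ≤ t → (∫ x : ℝ, |v t x - v s x|) ≤ ‖ℓ‖ * M * |t - s| := by
    intro s t hs ht
    calc (∫ x : ℝ, |v t x - v s x|) ≤ ∫ x, ‖ℓ‖ * ‖u t x - u s x‖ := by
          refine integral_mono ((hvi t).sub (hvi s)).abs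
            (((hui t).sub (hui s)).norm.const_mul _) fun x => ?_
          simp only [hv, ← inner_sub_right]
          exact abs_real_inner_le_norm _ _
      _ = ‖ℓ‖ * ∫ x, ‖u t x - u s x‖ := integral_const_mul _ _
      _ ≤ ‖ℓ‖ * (M * |t - s|) := by gcongr; exact hul s t hs ht
      _ = _ := by ring
  have hvw : ∀ φ : ℝ × ℝ → ℝ, ContDiff ℝ 1 φ → HasCompactSupport φ →
        tsupport φ ⊆ Set.Ioi (0 : ℝ) ×ˢ Set.univ →
        ∫ p : ℝ × ℝ, (ptime φ p * v p.1 p.2 + pspace φ p * (lam * v p.1 p.2 + g p.1 p.2)) = 0 := by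
    intro φ h1 h2 h3
    rw [← weak_component f hf.continuous R u hum huR hweak ℓ φ h1 h2 h3]
    congr 1; funext p
    simp only [hv, hg, inner_sub_right, hleft]
    ring
  -- closeness of `u τ x` to the reference state
  have hclose : ∀ x ∈ Ioo a b, ‖u τ x - u τ ξ‖ ≤ ε := by
    intro x hx
    have := (eVariationOn.edist_le (u τ) hx hξ).trans hTVτ
    rw [edist_dist, ENNReal.ofReal_le_ofReal_iff hε.le, dist_eq_norm] at this
    exact this
  -- pointwise bound for the variation of `g`
  have hgvar : ∀ t, 0 ≤ t → ∀ J : Set ℝ, ∀ ρ, 0 ≤ ρ → ∀ V, 0 ≤ V →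
      (∀ x ∈ J, ‖u t x - u τ ξ‖ ≤ ρ) → eVariationOn (u t) J ≤ ENNReal.ofReal V →
      eVariationOn (g t) J ≤ ENNReal.ofReal (‖ℓ‖ * (L * ρ) * V) := by
    intro t ht J ρ hρ V hV hJ hJV
    have hl := hLip (u τ ξ) (by simpa using huR τ ξ) ρ hρ ℓ
    have := hl.comp_eVariationOn_le (g := u t) (s := J) (fun x hx =>
      ⟨by simpa using huR t x, by simpa [dist_eq_norm] using hJ x hx⟩)
    refine this.trans ?_
    rw [ENNReal.ofReal_mul (by positivity)]
    gcongr
    exact le_rfl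
  have hgood : ∀ t ∈ Icc τ (τ + h), t ∉ bad →
      eVariationOn (g t) (Ioo (a + (t - τ)) (b - (t - τ))) ≤
        ENNReal.ofReal (‖ℓ‖ * (8 * L * ε ^ 2)) := by
    intro t ht htb
    have ht0 : 0 ≤ t := hτ.trans ht.1
    have hV : eVariationOn (u t) (Ioo (a + (t - τ)) (b - (t - τ))) ≤ ENNReal.ofReal (2 * ε) := by
      have hle : (eVariationOn (u t) (Ioo (a + (t - τ)) (b - (t - τ)))).toReal ≤ 2 * ε := by
        by_contra hcon
        exact htb ⟨ht, not_le.1 hcon⟩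
      refine (ENNReal.le_ofReal_iff_toReal_le ?_ (by linarith)).2 hle
      exact ne_top_of_le_ne_top ENNReal.ofReal_ne_top
        ((eVariationOn.mono _ (subset_univ _)).trans (hTV t ht0))
    have hex : ∃ x₀ ∈ Ioo (a + (t - τ)) (b - (t - τ)), ‖u t x₀ - u τ x₀‖ ≤ ε := by
      by_contra hcon
      push Not at hcon
      have h1 : ε * (b - a - 2 * (t - τ)) ≤
          ∫ x in Ioo (a + (t - τ)) (b - (t - τ)), ‖u t x - u τ x‖ := by
        have := setIntegral_mono_on (μ := volume) (s := Ioo (a + (t - τ)) (b - (t - τ)))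
          (f := fun _ => ε) (g := fun x => ‖u t x - u τ x‖) (by simp)
          ((hui t).sub (hui τ)).norm.integrableOn measurableSet_Ioo (fun x hx => (hcon x hx).le)
        refine le_trans (le_of_eq ?_) this
        rw [setIntegral_const, Real.volume_real_Ioo_of_le (by linarith [ht.2]), smul_eq_mul]
        ring
      have h2 : ∫ x in Ioo (a + (t - τ)) (b - (t - τ)), ‖u t x - u τ x‖ ≤
          ∫ x, ‖u t x - u τ x‖ := setIntegral_le_integral ((hui t).sub (hui τ)).norm
            (Eventually.of_forall fun x => norm_nonneg _)
      have h3 := hul τ t hτ ht0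
      rw [abs_of_nonneg (by linarith [ht.1])] at h3
      have h4 : M * (t - τ) ≤ M * h := by gcongr; linarith [ht.2]
      have h5 : ε * ((b - a) / 2) ≤ ε * (b - a - 2 * (t - τ)) := by gcongr; linarith [ht.2]
      linarith
    obtain ⟨x₀, hx₀, hx₀e⟩ := hex
    have hρ : ∀ x ∈ Ioo (a + (t - τ)) (b - (t - τ)), ‖u t x - u τ ξ‖ ≤ 4 * ε := by
      intro x hx
      have h1 := (eVariationOn.edist_le (u t) hx hx₀).trans hV
      rw [edist_dist, ENNReal.ofReal_le_ofReal_iff (by linarith), dist_eq_norm] at h1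
      have h2 := hclose x₀ ⟨by linarith [hx₀.1, ht.1], by linarith [hx₀.2, ht.1]⟩
      have h3 : u t x - u τ ξ = (u t x - u t x₀) + (u t x₀ - u τ x₀) + (u τ x₀ - u τ ξ) := by abel
      rw [h3]
      refine (norm_add₃_le).trans ?_
      linarith
    refine (hgvar t ht0 _ (4 * ε) (by linarith) (2 * ε) (by linarith) hρ hV).trans (le_of_eq ?_)
    congr 1; ring
  have hany : ∀ t, 0 ≤ t → eVariationOn (g t) (Ioo (a + (t - τ)) (b - (t - τ))) ≤
        ENNReal.ofReal (‖ℓ‖ * (2 * R * L * M)) := by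
    intro t ht0
    refine (hgvar t ht0 _ (2 * R) (by linarith) M hM.le ?_
      ((eVariationOn.mono _ (subset_univ _)).trans (hTV t ht0))).trans (le_of_eq ?_)
    · intro x _
      refine (norm_sub_le _ _).trans ?_
      linarith [huR t x, huR τ ξ]
    · congr 1; ring
  set bm := toMeasurable volume bad with hbm
  have hbmm : MeasurableSet bm := measurableSet_toMeasurable _ _
  have hbmv : volume bm = volume bad := measure_toMeasurable _
  have hbadfin : volume bad ≠ ⊤ := by
    refine ne_top_of_le_ne_top ?_ (measure_mono (show bad ⊆ Icc τ (τ + h) from fun t ht => ht.1))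
    simp
  set κ : ℝ → ℝ := fun t => ‖ℓ‖ * (8 * L * ε ^ 2) +
    bm.indicator (fun _ => ‖ℓ‖ * (2 * R * L * M)) t with hκ
  have hindI : Integrable (bm.indicator (fun _ => ‖ℓ‖ * (2 * R * L * M))) volume := by
    rw [integrable_indicator_iff hbmm]
    exact integrableOn_const (by rw [hbmv]; exact hbadfin)
  have hκI : IntervalIntegrable κ volume τ (τ + h) :=
    IntervalIntegrable.add (by simp) hindI.intervalIntegrable
  have hκint : ∫ t in τ..(τ + h), κ t ≤ ‖ℓ‖ * (8 * L * ε ^ 2 * h + 2 * R * L * M *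
      (volume bad).toReal) := by
    rw [hκ, intervalIntegral.integral_add (by simp) hindI.intervalIntegrable]
    have h1 : ∫ t in τ..(τ + h), bm.indicator (fun _ => ‖ℓ‖ * (2 * R * L * M)) t ≤
        ‖ℓ‖ * (2 * R * L * M) * (volume bad).toReal := by
      rw [intervalIntegral.integral_of_le (by linarith)]
      refine (setIntegral_le_integral hindI (Eventually.of_forall fun x => ?_)).trans ?_
      · exact indicator_nonneg (fun _ _ => by positivity) _
      · rw [integral_indicator hbmm, setIntegral_const, Measure.real, hbmv, smul_eq_mul, mul_comm]
    have h2 : ∫ t in τ..(τ + h), ‖ℓ‖ * (8 * L * ε ^ 2) = ‖ℓ‖ * (8 * L * ε ^ 2) * h := by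
      rw [intervalIntegral.integral_const, smul_eq_mul]; ring
    rw [h2]
    nlinarith
  -- duality
  have hshift : Integrable (fun x => v τ (x - h * lam)) := (hvi τ).comp_sub_right (h * lam)
  refine l1_duality (fun x => v (τ + h) x - v τ (x - h * lam))
    ((hvm' _).sub ((hvm' τ).comp (measurable_id.sub_const _)))
    ((hvi _).sub hshift) (a + h) (b - h) _ ?_
  intro ψ hψ hψc hψs hψ1
  obtain ⟨hGI, hW⟩ := weak_identity v g lam hvm hgm _ hvB hgB hvi (‖ℓ‖ * M) (by positivity) hvl hvw
    τ (τ + h) hτ (by linarith) ψ hψ hψc hψ1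
  have hsplit : ∫ x, ψ x * (v (τ + h) x - v τ (x - h * lam)) =
      (∫ x, ψ x * v (τ + h) x) - ∫ x, ψ (x + (τ + h - τ) * lam) * v τ x := by
    have hm : AEStronglyMeasurable ψ volume := hψ.continuous.aestronglyMeasurable
    have e1 : ∫ x, ψ (x + (τ + h - τ) * lam) * v τ x = ∫ x, ψ x * v τ (x - h * lam) := by
      rw [← integral_sub_right_eq_self _ (h * lam)]
      congr 1; funext x
      congr 2; ring
    rw [e1, ← integral_sub ((hvi _).bdd_mul (c := 1) hm (Eventually.of_forall hψ1))
      (hshift.bdd_mul (c := 1) hm (Eventually.of_forall hψ1))]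
    congr 1; funext x; ring
  rw [hsplit]
  refine hW.trans (le_trans ?_ hκint)
  refine intervalIntegral.integral_mono_on (by linarith) hGI hκI fun t ht => ?_
  have ht0 : 0 ≤ t := hτ.trans ht.1
  -- pairing
  have hpair : ∀ V, 0 ≤ V → eVariationOn (g t) (Ioo (a + (t - τ)) (b - (t - τ))) ≤
      ENNReal.ofReal V → |∫ x, deriv ψ (x + (τ + h - t) * lam) * g t x| ≤ V := by
    intro V hV0 hV
    have := bv_pairing (g t) (fun x => ψ (x + (τ + h - t) * lam)) (hgm' t) _ (hgB t)
      (a + (t - τ)) (b - (t - τ)) V hV0 hV (hψ.comp (by fun_prop))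
      (hψc.comp_homeomorph (Homeomorph.addRight ((τ + h - t) * lam))) ?_ (fun x => hψ1 _)
    · simpa only [deriv_comp_add_const] using this
    · intro x hx
      have hx' : x + (τ + h - t) * lam ∈ tsupport ψ :=
        tsupport_comp_subset_preimage ψ (f := fun x => x + (τ + h - t) * lam)
          (by fun_prop) hx
      have := hψs hx'
      have c1 : (τ + h - t) * lam ≤ τ + h - t := by nlinarith [ht.2, hlam.2]
      have c2 : -(τ + h - t) ≤ (τ + h - t) * lam := by nlinarith [ht.2, hlam.1]
      exact ⟨by linarith [this.1], by linarith [this.2]⟩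
  by_cases htb : t ∈ bad
  · have htm : t ∈ bm := subset_toMeasurable _ _ htb
    simp only [hκ, indicator_of_mem htm]
    refine (hpair _ (by positivity) (hany t ht0)).trans ?_
    have : 0 ≤ ‖ℓ‖ * (8 * L * ε ^ 2) := by positivity
    linarith
  · refine (hpair _ (by positivity) (hgood t ht htb)).trans ?_
    have : 0 ≤ bm.indicator (fun _ => ‖ℓ‖ * (2 * R * L * M)) t :=
      indicator_nonneg (fun _ _ => by positivity) _
    simp only [hκ]
    linarith


set_option maxHeartbeats 2000000

/-- **Comparison with the solution of a linearized problem (Lemma 6.3).**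
Consider a strictly hyperbolic system `u_t + f(u)_x = 0` with characteristic speeds in
`[-1,1]` (eigenvalues `λᵢ`, right eigenvectors `rᵢ`, dual left eigenvectors `lᵢ`), and
solutions taking values in a fixed compact set `K`.  There is a constant `C`, depending
only on the system and on `M`, with the following property.  Let `t ↦ u(t,·)` be a weak
solution, Lipschitz continuous with values in `L¹(ℝ;ℝⁿ)`, such that
(i) `Tot.Var.{u(t,·)} ≤ M` for all `t ≥ 0`;
(ii) `Tot.Var.{u(τ,·); (a,b)} ≤ ε`;
(iii) setting `V(t) = Tot.Var.{u(t,·); (a+(t-τ), b-(t-τ))}`, the relative measure of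
`{t ∈ [τ,τ+h] : V(t) > 2ε}` tends to `0` as `h → 0+`.
Let `ξ ∈ (a,b)`, `Ã = Df(u(τ,ξ))`, and let `W` be the solution of the linear
constant-coefficient problem `w_t + Ã w_x = 0`, `w(τ,·) = u(τ,·)`, given explicitly by
`W(τ+h, x) = Σᵢ ⟪lᵢ(ũ), u(τ, x - h λᵢ(ũ))⟫ rᵢ(ũ)` with `ũ = u(τ,ξ)`.  Then
`limsup_{h→0+} (1/h) ∫_{a+h}^{b-h} |u(τ+h,x) - W(τ+h,x)| dx ≤ C ε²`. -/
theorem comparison_with_linearized_evolution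
    {n : ℕ} (f : EuclideanSpace ℝ (Fin n) → EuclideanSpace ℝ (Fin n))
    (hf : ContDiff ℝ 2 f)
    (lam : Fin n → EuclideanSpace ℝ (Fin n) → ℝ)
    (r l : Fin n → EuclideanSpace ℝ (Fin n) → EuclideanSpace ℝ (Fin n))
    (hstrict : ∀ v, StrictMono fun i => lam i v)
    (hspeeds : ∀ i v, lam i v ∈ Set.Icc (-1 : ℝ) 1)
    (hright : ∀ i v, fderiv ℝ f v (r i v) = lam i v • r i v)
    (hleft : ∀ i v (w : EuclideanSpace ℝ (Fin n)),
      ⟪l i v, fderiv ℝ f v w⟫ = lam i v * ⟪l i v, w⟫)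
    (hdual : ∀ i j v, ⟪l i v, r j v⟫ = if i = j then (1 : ℝ) else 0)
    (K : Set (EuclideanSpace ℝ (Fin n))) (hK : IsCompact K)
    (M : ℝ) (hM : 0 < M) :
    ∃ C : ℝ, ∀ (u : ℝ → ℝ → EuclideanSpace ℝ (Fin n)),
      Measurable (Function.uncurry u) →
      (∀ t x : ℝ, u t x ∈ K) →
      (∀ t : ℝ, Integrable (u t)) →
      -- `t ↦ u(t,·)` is Lipschitz continuous with values in `L¹`
      (∀ s t : ℝ, 0 ≤ s → 0 ≤ t → (∫ x : ℝ, ‖u t x - u s x‖) ≤ M * |t - s|) →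
      -- `u` is a weak solution on `(0,∞) × ℝ`
      (∀ φ : ℝ × ℝ → ℝ, ContDiff ℝ 1 φ → HasCompactSupport φ →
        tsupport φ ⊆ Set.Ioi (0 : ℝ) ×ˢ Set.univ →
        ∫ p : ℝ × ℝ, (ptime φ p • u p.1 p.2 + pspace φ p • f (u p.1 p.2)) = 0) →
      ∀ (τ a b ε ξ : ℝ), 0 ≤ τ → a < b → 0 < ε → ξ ∈ Set.Ioo a b →
      -- (i) uniform bound on the total variation
      (∀ t : ℝ, 0 ≤ t → eVariationOn (u t) Set.univ ≤ ENNReal.ofReal M) →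
      -- (ii) small total variation on `(a,b)` at time `τ`
      eVariationOn (u τ) (Set.Ioo a b) ≤ ENNReal.ofReal ε →
      -- (iii) the superlevel set `{V > 2ε}` has vanishing relative measure
      Tendsto
        (fun h : ℝ =>
          volume {t ∈ Set.Icc τ (τ + h) |
            2 * ε < (eVariationOn (u t)
              (Set.Ioo (a + (t - τ)) (b - (t - τ)))).toReal} / ENNReal.ofReal h)
        (𝓝[>] 0) (𝓝 0) →
      Filter.limsup
        (fun h : ℝ => (1 / h) *
          ∫ x in (a + h)..(b - h),
            ‖u (τ + h) x -
              ∑ i : Fin n, ⟪l i (u τ ξ), u τ (x - h * lam i (u τ ξ))⟫ • r i (u τ ξ)‖)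
        (𝓝[>] 0) ≤ C * ε ^ 2 := by
  obtain ⟨R, hKR⟩ := hK.isBounded.subset_closedBall (0 : EuclideanSpace ℝ (Fin n))
  obtain ⟨L, hL, hLip⟩ := flux_lip f hf R
  obtain ⟨B, hB, hproj⟩ := proj_bound (fun v => fderiv ℝ f v) (hf.continuous_fderiv (by norm_num))
    lam r l (fun v => (hstrict v).injective) hspeeds hright hdual K hK
  refine ⟨n * (B * (8 * L + 1)), ?_⟩
  intro u hum huK hui hul hweak τ a b ε ξ hτ hab hε hξ hTV hTVτ hIII
  have huR : ∀ t x, ‖u t x‖ ≤ R := fun t x => by simpa using hKR (huK t x)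
  have hR : 0 ≤ R := (norm_nonneg _).trans (huR 0 0)
  set w₀ := u τ ξ with hw₀
  obtain ⟨-, -, hexp⟩ := eig_expand (fun i => r i w₀) (fun i => l i w₀) (fun i j => hdual i j w₀)
  -- smallness of h
  set D : ℝ := 2 * R * L * M + 1 with hD
  have hDpos : 0 < D := by positivity
  have e1 : ∀ᶠ h : ℝ in 𝓝[>] 0, h < (b - a) / 4 :=
    (Iio_mem_nhds (by linarith : (0:ℝ) < (b - a) / 4)) |> fun hm => mem_nhdsWithin_of_mem_nhds hm
  have e2 : ∀ᶠ h : ℝ in 𝓝[>] 0, h < ε * ((b - a) / 2) / M :=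
    mem_nhdsWithin_of_mem_nhds (Iio_mem_nhds (div_pos (mul_pos hε (by linarith)) hM))
  have e3 := hIII.eventually (gt_mem_nhds
    (show (0 : ENNReal) < ENNReal.ofReal (ε ^ 2 / D) by simp; positivity))
  have e0 : ∀ᶠ h : ℝ in 𝓝[>] 0, 0 < h := self_mem_nhdsWithin
  have hnonneg : ∀ᶠ h : ℝ in 𝓝[>] 0, 0 ≤ (1 / h) *
          ∫ x in (a + h)..(b - h),
            ‖u (τ + h) x -
              ∑ i : Fin n, ⟪l i w₀, u τ (x - h * lam i w₀)⟫ • r i w₀‖ := by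
    filter_upwards [e0, e1] with h h0 h1
    refine mul_nonneg (by positivity) (intervalIntegral.integral_nonneg (by linarith) ?_)
    intro x _
    exact norm_nonneg _
  refine Filter.limsup_le_of_le ?_ ?_
  · exact (isBoundedUnder_of_eventually_ge hnonneg).isCoboundedUnder_le
  filter_upwards [e0, e1, e2, e3] with h h0 h1 h2 h3
  have h2' : M * h < ε * ((b - a) / 2) := by
    rw [lt_div_iff₀ hM] at h2; linarith
  set bad : Set ℝ := {t ∈ Set.Icc τ (τ + h) |
            2 * ε < (eVariationOn (u t)
              (Set.Ioo (a + (t - τ)) (b - (t - τ)))).toReal} with hbad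
  have hbv : (volume bad).toReal ≤ ε ^ 2 / D * h := by
    have : volume bad ≤ ENNReal.ofReal (ε ^ 2 / D) * ENNReal.ofReal h :=
      (ENNReal.div_le_iff (by simpa using h0) (by simp)).1 h3.le
    rw [← ENNReal.ofReal_mul (by positivity)] at this
    exact ENNReal.toReal_le_of_le_ofReal (by positivity) this
  have hbv2 : 2 * R * L * M * (volume bad).toReal ≤ ε ^ 2 * h := by
    calc 2 * R * L * M * (volume bad).toReal ≤ D * (volume bad).toReal :=
          mul_le_mul_of_nonneg_right (by rw [hD]; linarith) ENNReal.toReal_nonneg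
      _ ≤ D * (ε ^ 2 / D * h) := mul_le_mul_of_nonneg_left hbv hDpos.le
      _ = ε ^ 2 * h := by field_simp
  have hcomp : ∀ i, ∫ x in Ioo (a + h) (b - h),
      |⟪l i w₀, u (τ + h) x⟫ - ⟪l i w₀, u τ (x - h * lam i w₀)⟫| ≤
      ‖l i w₀‖ * (8 * L * ε ^ 2 * h + 2 * R * L * M * (volume bad).toReal) := fun i =>
    component_estimate f hf R L hL hLip M hM u hum huR hui hul hweak τ a b ε ξ hτ hε hξ hTV hTVτ
      (l i w₀) (lam i w₀) (hspeeds i w₀) (hleft i w₀) h h0 h1 h2'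
  have hint : ∀ i, Integrable (fun x =>
      |⟪l i w₀, u (τ + h) x⟫ - ⟪l i w₀, u τ (x - h * lam i w₀)⟫|) := by
    intro i
    have q1 : Integrable (fun x => ⟪l i w₀, u (τ + h) x⟫) := (hui (τ + h)).const_inner (l i w₀)
    have q2 : Integrable (fun x => ⟪l i w₀, u τ x⟫) := (hui τ).const_inner (l i w₀)
    have q3 : Integrable (fun x => ⟪l i w₀, u τ (x - h * lam i w₀)⟫) :=
      q2.comp_sub_right (h * lam i w₀)
    exact (q1.sub q3).abs
  have hpt : ∀ x, ‖u (τ + h) x - ∑ i : Fin n, ⟪l i w₀, u τ (x - h * lam i w₀)⟫ • r i w₀‖ ≤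
      ∑ i : Fin n, |⟪l i w₀, u (τ + h) x⟫ - ⟪l i w₀, u τ (x - h * lam i w₀)⟫| * ‖r i w₀‖ := by
    intro x
    conv_lhs => rw [hexp (u (τ + h) x)]
    rw [← Finset.sum_sub_distrib]
    refine (norm_sum_le _ _).trans (le_of_eq (Finset.sum_congr rfl fun i _ => ?_))
    rw [← sub_smul, norm_smul, Real.norm_eq_abs]
  have hmain : ∫ x in (a + h)..(b - h),
      ‖u (τ + h) x - ∑ i : Fin n, ⟪l i w₀, u τ (x - h * lam i w₀)⟫ • r i w₀‖ ≤
      n * (B * (8 * L + 1)) * ε ^ 2 * h := by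
    rw [intervalIntegral.integral_of_le (by linarith), integral_Ioc_eq_integral_Ioo]
    calc _ ≤ ∫ x in Ioo (a + h) (b - h), ∑ i : Fin n,
          |⟪l i w₀, u (τ + h) x⟫ - ⟪l i w₀, u τ (x - h * lam i w₀)⟫| * ‖r i w₀‖ := by
          refine integral_mono_of_nonneg (Eventually.of_forall fun x => norm_nonneg _) ?_
            (Eventually.of_forall hpt)
          exact integrable_finsetSum _ fun i _ => ((hint i).mul_const _).integrableOn
      _ = ∑ i : Fin n, (∫ x in Ioo (a + h) (b - h),
          |⟪l i w₀, u (τ + h) x⟫ - ⟪l i w₀, u τ (x - h * lam i w₀)⟫|) * ‖r i w₀‖ := by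
          rw [integral_finsetSum _ fun i _ => ((hint i).mul_const _).integrableOn]
          exact Finset.sum_congr rfl fun i _ => integral_mul_const _ _
      _ ≤ ∑ i : Fin n, B * ((8 * L + 1) * ε ^ 2 * h) := by
          refine Finset.sum_le_sum fun i _ => ?_
          have hX : 0 ≤ (8 * L + 1) * ε ^ 2 * h := by positivity
          calc _ ≤ ‖l i w₀‖ * ((8 * L + 1) * ε ^ 2 * h) * ‖r i w₀‖ := by
                refine mul_le_mul_of_nonneg_right ((hcomp i).trans ?_) (norm_nonneg _)
                refine mul_le_mul_of_nonneg_left ?_ (norm_nonneg _)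
                linarith
            _ = (‖l i w₀‖ * ‖r i w₀‖) * ((8 * L + 1) * ε ^ 2 * h) := by ring
            _ ≤ _ := mul_le_mul_of_nonneg_right (hproj w₀ (huK τ ξ) i) hX
      _ = _ := by
          rw [Finset.sum_const, Finset.card_univ, Fintype.card_fin, nsmul_eq_mul]; ring
  rw [one_div, inv_mul_le_iff₀ h0]
  linarith
end
end
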